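/- arXiv:1410.1000 — 7 statements merged into one kernel-verified Lean document; each statement's English description precedes it below -/
import Mathlib

section
/- Let T > 0, k ≥ 0, λ > 0, and let φ : [0,T] → ℝ be continuous and satisfy the integral equation ∫₀^T min(k+t, k+s) φ(s) ds = λ φ(t) for all t ∈ [0,T]. Then φ is twice continuously differentiable on [0,T] and satisfies: λ φ''(t) = −φ(t) for all t ∈ [0,T], φ'(T) = 0, λ φ(0) = k ∫₀^T φ(s) ds, and λ φ'(0) = ∫₀^T φ(s) ds. -/
open MeasureTheory intervalIntegral

/-- Any continuous solution `φ` of the eigenvalue integral equation for the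
kernel `min (k+t) (k+s)` on `[0,T]` is twice continuously differentiable on
`[0,T]`, with `λφ'' = -φ`, `φ'(T) = 0`, `λφ(0) = k∫₀ᵀφ` and `λφ'(0) = ∫₀ᵀφ`. -/
theorem gsp_wiener_eigenfunction_ode
    (T k lam : ℝ) (hT : 0 < T) (hk : 0 ≤ k) (hlam : 0 < lam)
    (φ : ℝ → ℝ) (hφcont : ContinuousOn φ (Set.Icc 0 T))
    (heq : ∀ t ∈ Set.Icc (0 : ℝ) T,
      ∫ s in (0 : ℝ)..T, min (k + t) (k + s) * φ s = lam * φ t) :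
    ∃ φ' φ'' : ℝ → ℝ,
      (∀ t ∈ Set.Icc (0 : ℝ) T, HasDerivWithinAt φ (φ' t) (Set.Icc 0 T) t) ∧
      (∀ t ∈ Set.Icc (0 : ℝ) T, HasDerivWithinAt φ' (φ'' t) (Set.Icc 0 T) t) ∧
      ContinuousOn φ' (Set.Icc 0 T) ∧
      ContinuousOn φ'' (Set.Icc 0 T) ∧
      (∀ t ∈ Set.Icc (0 : ℝ) T, lam * φ'' t = -φ t) ∧
      φ' T = 0 ∧
      lam * φ 0 = k * ∫ s in (0 : ℝ)..T, φ s ∧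
      lam * φ' 0 = ∫ s in (0 : ℝ)..T, φ s := by
  obtain ⟨g, hg, hgφ⟩ : ∃ g : ℝ → ℝ, Continuous g ∧ ∀ t ∈ Set.Icc (0 : ℝ) T, g t = φ t := by
    refine ⟨Set.IccExtend hT.le ((Set.Icc 0 T).restrict φ), ?_, ?_⟩
    · exact hφcont.restrict.Icc_extend'
    · intro t ht
      rw [Set.IccExtend_of_mem _ _ ht]
      rfl
  have hkg : Continuous (fun s => (k + s) * g s) := by fun_prop
  have hG : ∀ t, HasDerivAt (fun u => ∫ s in (0 : ℝ)..u, g s) (g t) t := fun t =>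
    hg.integral_hasStrictDerivAt 0 t |>.hasDerivAt
  have hF : ∀ t, HasDerivAt (fun u => ∫ s in (0 : ℝ)..u, (k + s) * g s) ((k + t) * g t) t :=
    fun t => hkg.integral_hasStrictDerivAt 0 t |>.hasDerivAt
  have hI : ∫ s in (0 : ℝ)..T, φ s = ∫ s in (0 : ℝ)..T, g s := by
    refine integral_congr fun s hs => ?_
    rw [Set.uIcc_of_le hT.le] at hs
    exact (hgφ s hs).symm
  have key : ∀ t ∈ Set.Icc (0 : ℝ) T, φ t = ((∫ s in (0 : ℝ)..t, (k + s) * g s) +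
      (k + t) * ((∫ s in (0 : ℝ)..T, g s) - ∫ s in (0 : ℝ)..t, g s)) / lam := by
    intro t ht
    rw [eq_div_iff hlam.ne', mul_comm, ← heq t ht]
    have h1 : ∫ s in (0 : ℝ)..T, min (k + t) (k + s) * φ s
        = ∫ s in (0 : ℝ)..T, min (k + t) (k + s) * g s := by
      refine integral_congr fun s hs => ?_
      rw [Set.uIcc_of_le hT.le] at hs
      simp only [hgφ s hs]
    have hm : Continuous (fun s => min (k + t) (k + s) * g s) := by fun_prop
    rw [h1, ← integral_add_adjacent_intervals (hm.intervalIntegrable 0 t)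
      (hm.intervalIntegrable t T), integral_interval_sub_left (hg.intervalIntegrable _ _)
      (hg.intervalIntegrable _ _), ← intervalIntegral.integral_const_mul]
    congr 1
    · refine integral_congr fun s hs => ?_
      rw [Set.uIcc_of_le ht.1] at hs
      simp only [min_eq_right (add_le_add_right hs.2 k)]
    · refine integral_congr fun s hs => ?_
      rw [Set.uIcc_of_le ht.2] at hs
      simp only [min_eq_left (add_le_add_right hs.1 k)]
  have hd2 : ∀ t, HasDerivAt (fun u => ((∫ s in (0 : ℝ)..T, g s) - ∫ s in (0 : ℝ)..u, g s) / lam)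
      (-g t / lam) t := fun t => ((hG t).const_sub _).div_const lam
  refine ⟨fun u => ((∫ s in (0 : ℝ)..T, g s) - ∫ s in (0 : ℝ)..u, g s) / lam,
    fun u => -g u / lam, ?_, fun t _ => (hd2 t).hasDerivWithinAt,
    fun t _ => (hd2 t).continuousAt.continuousWithinAt,
    (hg.neg.div_const lam).continuousOn, ?_, ?_, ?_, ?_⟩
  · intro t ht
    have h := (((hF t).add (((hasDerivAt_id t).const_add k).mul
      ((hG t).const_sub (∫ s in (0 : ℝ)..T, g s)))).div_const lam).hasDerivWithinAt
      (s := Set.Icc 0 T)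
    refine (h.congr (fun x hx => key x hx) (key t ht)).congr_deriv ?_
    simp only [id]
    ring
  · intro t ht
    simp only [hgφ t ht]
    field_simp
  · simp
  · rw [key 0 ⟨le_rfl, hT.le⟩, hI]
    simp
    field_simp
  · rw [hI]
    simp
    field_simp
end

section
/- Let T > 0, k ≥ 0, λ > 0, and let φ : [0,T] → ℝ be continuous, not identically zero, and satisfy the integral equation ∫₀^T min(k+t, k+s) φ(s) ds = λ φ(t) for all t ∈ [0,T]. Then √λ · cos(T/√λ) = k · sin(T/√λ) (equivalently, cot(T/√λ) = k/√λ). -/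
open MeasureTheory intervalIntegral

/-- If `λ > 0` admits a nonzero continuous eigenfunction for the kernel
`min (k+t) (k+s)` on `[0,T]`, then `√λ·cos(T/√λ) = k·sin(T/√λ)`. -/
theorem gsp_wiener_eigenvalue_equation
    (T k lam : ℝ) (hT : 0 < T) (hk : 0 ≤ k) (hlam : 0 < lam)
    (φ : ℝ → ℝ) (hφcont : ContinuousOn φ (Set.Icc 0 T))
    (hφne : ∃ t ∈ Set.Icc (0 : ℝ) T, φ t ≠ 0)
    (heq : ∀ t ∈ Set.Icc (0 : ℝ) T,
      ∫ s in (0 : ℝ)..T, min (k + t) (k + s) * φ s = lam * φ t) :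
    Real.sqrt lam * Real.cos (T / Real.sqrt lam) =
      k * Real.sin (T / Real.sqrt lam) := by
  obtain ⟨ψ, hψ, hψφ⟩ : ∃ ψ : ℝ → ℝ, Continuous ψ ∧ ∀ t ∈ Set.Icc (0 : ℝ) T, ψ t = φ t :=
    ⟨Set.IccExtend hT.le (Set.domRestrict (Set.Icc 0 T) φ), hφcont.domRestrict.Icc_extend',
      fun t ht => by simp [Set.IccExtend_of_mem _ _ ht]⟩
  have hsψ : Continuous (fun s => s * ψ s) := continuous_id.mul hψ
  obtain ⟨P, hP⟩ : ∃ P : ℝ → ℝ, P = fun t => ∫ s in (0 : ℝ)..t, ψ s := ⟨_, rfl⟩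
  obtain ⟨Q, hQ⟩ : ∃ Q : ℝ → ℝ, Q = fun t => ∫ s in (0 : ℝ)..t, s * ψ s := ⟨_, rfl⟩
  have hP0 : P 0 = 0 := by simp [hP]
  have hQ0 : Q 0 = 0 := by simp [hQ]
  have dP : ∀ t, HasDerivAt P (ψ t) t := fun t => by
    rw [hP]; exact hψ.integral_hasStrictDerivAt 0 t |>.hasDerivAt
  have dQ : ∀ t, HasDerivAt Q (t * ψ t) t := fun t => by
    rw [hQ]; exact hsψ.integral_hasStrictDerivAt 0 t |>.hasDerivAt
  have iψ : ∀ a b, IntervalIntegrable ψ volume a b := fun a b => hψ.intervalIntegrable a b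
  have isψ : ∀ a b, IntervalIntegrable (fun s => s * ψ s) volume a b :=
    fun a b => hsψ.intervalIntegrable a b
  have key : ∀ t ∈ Set.Icc (0 : ℝ) T, lam * ψ t = k * P T + Q t + t * (P T - P t) := by
    intro t ht
    have hc : Continuous (fun s => min (k + t) (k + s) * ψ s) := by fun_prop
    have h1 : ∫ s in (0 : ℝ)..t, min (k + t) (k + s) * ψ s = k * P t + Q t := by
      rw [hP, hQ]
      simp only
      rw [← intervalIntegral.integral_const_mul,
        ← intervalIntegral.integral_add ((iψ 0 t).const_mul k) (isψ 0 t)]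
      apply intervalIntegral.integral_congr
      intro s hs
      rw [Set.uIcc_of_le ht.1] at hs
      simp only
      rw [min_eq_right (by linarith [hs.2])]
      ring
    have h2 : ∫ s in t..T, min (k + t) (k + s) * ψ s = (k + t) * (P T - P t) := by
      rw [hP]
      simp only
      rw [intervalIntegral.integral_interval_sub_left (iψ 0 T) (iψ 0 t),
        ← intervalIntegral.integral_const_mul]
      apply intervalIntegral.integral_congr
      intro s hs
      rw [Set.uIcc_of_le ht.2] at hs
      simp only
      rw [min_eq_left (by linarith [hs.1])]
    have h3 : ∫ s in (0 : ℝ)..T, min (k + t) (k + s) * ψ s = lam * ψ t := by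
      rw [hψφ t ht, ← heq t ht]
      apply intervalIntegral.integral_congr
      intro s hs
      rw [Set.uIcc_of_le hT.le] at hs
      simp only [hψφ s hs]
    rw [← h3, ← intervalIntegral.integral_add_adjacent_intervals
      (hc.intervalIntegrable 0 t) (hc.intervalIntegrable t T), h1, h2]
    ring
  obtain ⟨F, hF⟩ : ∃ F : ℝ → ℝ, F = fun t => k * P T + Q t + t * (P T - P t) := ⟨_, rfl⟩
  obtain ⟨G, hG⟩ : ∃ G : ℝ → ℝ, G = fun t => P T - P t := ⟨_, rfl⟩
  have dG : ∀ t, HasDerivAt G (-ψ t) t := fun t => by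
    rw [hG]; exact (dP t).const_sub _
  have dF : ∀ t, HasDerivAt F (G t) t := fun t => by
    have h := ((dQ t).const_add (k * P T)).add ((hasDerivAt_id t).mul ((dP t).const_sub (P T)))
    rw [hF, hG]
    refine h.congr_deriv ?_
    simp
  have hFψ : ∀ t ∈ Set.Icc (0 : ℝ) T, F t = lam * ψ t := fun t ht => by
    rw [key t ht, hF]
  have hGT : G T = 0 := by simp [hG]
  have hF0 : F 0 = k * G 0 := by simp [hF, hG, hP0, hQ0]
  obtain ⟨r, hr⟩ : ∃ r, r = Real.sqrt lam := ⟨_, rfl⟩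
  have hrpos : 0 < r := by rw [hr]; exact Real.sqrt_pos.2 hlam
  have hrl : lam = r * r := by rw [hr, Real.mul_self_sqrt hlam.le]
  rw [← hr]
  have dc : ∀ t, HasDerivAt (fun t => Real.cos (t / r)) (-Real.sin (t / r) * (1 / r)) t :=
    fun t => ((hasDerivAt_id t).div_const r).cos
  have ds : ∀ t, HasDerivAt (fun t => Real.sin (t / r)) (Real.cos (t / r) * (1 / r)) t :=
    fun t => ((hasDerivAt_id t).div_const r).sin
  have const : ∀ A A' : ℝ → ℝ, (∀ t, HasDerivAt A (A' t) t) →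
      (∀ t ∈ Set.Icc (0 : ℝ) T, A' t = 0) → ∀ t ∈ Set.Icc (0 : ℝ) T, A t = A 0 := by
    intro A A' h h0
    apply constant_of_has_deriv_right_zero
    · exact fun t _ => (h t).continuousAt.continuousWithinAt
    · intro t ht
      have := (h t).hasDerivWithinAt (s := Set.Ici t)
      rwa [h0 t ⟨ht.1, ht.2.le⟩] at this
  have hA := const _ _ (fun t => ((dF t).mul (dc t)).sub (((dG t).mul (ds t)).const_mul r))
    (by
      intro t ht
      rw [hFψ t ht, hrl]
      field_simp
      ring)
  have hB := const _ _ (fun t => ((dF t).mul (ds t)).add (((dG t).mul (dc t)).const_mul r))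
    (by
      intro t ht
      rw [hFψ t ht, hrl]
      field_simp
      ring)
  simp only [Pi.mul_apply, Pi.sub_apply, Pi.add_apply, zero_div, Real.cos_zero, Real.sin_zero, mul_zero, mul_one, sub_zero,
    zero_add, hF0] at hA hB
  have hTm : T ∈ Set.Icc (0 : ℝ) T := ⟨hT.le, le_rfl⟩
  have hAT := hA T hTm
  have hBT := hB T hTm
  simp only [hGT, zero_mul, mul_zero, sub_zero, add_zero] at hAT hBT
  by_cases hFT : F T = 0
  · exfalso
    rw [hFT, zero_mul] at hBT
    have hG0 : G 0 = 0 := by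
      rcases mul_eq_zero.1 hBT.symm with h | h
      · exact absurd h hrpos.ne'
      · exact h
    obtain ⟨t, ht, hne⟩ := hφne
    have a := hA t ht
    have b := hB t ht
    rw [hG0] at a b
    have hz : F t = 0 := by
      linear_combination Real.cos (t / r) * a + Real.sin (t / r) * b
        - F t * Real.sin_sq_add_cos_sq (t / r)
    rw [hFψ t ht, hψφ t ht] at hz
    rcases mul_eq_zero.1 hz with h | h
    · exact hlam.ne' h
    · exact hne h
  · apply mul_left_cancel₀ hFT
    linear_combination r * hAT - k * hBT
end

section
/- Let T > 0, k ≥ 0 and λ > 0 satisfy √λ · cos(T/√λ) = k · sin(T/√λ). Then the function φ(t) = √λ · sin(t/√λ) + k · cos(t/√λ) satisfies the integral equation ∫₀^T min(k+t, k+s) φ(s) ds = λ φ(t) for all t ∈ [0,T]; i.e., λ is an eigenvalue of the covariance operator with kernel min(k+t, k+s) on L²([0,T]) with eigenfunction φ. -/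
open MeasureTheory intervalIntegral

/-- Conversely, if `λ > 0` satisfies `√λ·cos(T/√λ) = k·sin(T/√λ)`, then
`φ(t) = √λ·sin(t/√λ) + k·cos(t/√λ)` solves the eigenvalue integral equation
for the kernel `min (k+t) (k+s)` on `[0,T]`. -/
theorem gsp_wiener_eigenfunction_converse
    (T k lam : ℝ) (hT : 0 < T) (hk : 0 ≤ k) (hlam : 0 < lam)
    (hroot : Real.sqrt lam * Real.cos (T / Real.sqrt lam) =
      k * Real.sin (T / Real.sqrt lam)) :
    ∀ t ∈ Set.Icc (0 : ℝ) T,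
      (∫ s in (0 : ℝ)..T, min (k + t) (k + s) *
        (Real.sqrt lam * Real.sin (s / Real.sqrt lam) +
          k * Real.cos (s / Real.sqrt lam))) =
      lam * (Real.sqrt lam * Real.sin (t / Real.sqrt lam) +
        k * Real.cos (t / Real.sqrt lam)) := by
  intro t ht
  obtain ⟨ht0, htT⟩ := ht
  have ha : 0 < Real.sqrt lam := Real.sqrt_pos.mpr hlam
  have hsq : lam = Real.sqrt lam ^ 2 := (Real.sq_sqrt hlam.le).symm
  generalize Real.sqrt lam = a at *
  subst hsq
  have hne : a ≠ 0 := ha.ne'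
  have hsin : ∀ x : ℝ, HasDerivAt (fun s => Real.sin (s / a)) (Real.cos (x / a) * (1 / a)) x :=
    fun x => ((hasDerivAt_id x).div_const a).sin
  have hcos : ∀ x : ℝ, HasDerivAt (fun s => Real.cos (s / a)) (-Real.sin (x / a) * (1 / a)) x :=
    fun x => ((hasDerivAt_id x).div_const a).cos
  have hPhi : ∀ x : ℝ, HasDerivAt
      (fun s => k * a * Real.sin (s / a) - a ^ 2 * Real.cos (s / a))
      (a * Real.sin (x / a) + k * Real.cos (x / a)) x := by
    intro x
    refine (((hsin x).const_mul (k * a)).sub ((hcos x).const_mul (a ^ 2))).congr_deriv ?_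
    field_simp
    ring
  have hphi : ∀ x : ℝ, HasDerivAt
      (fun s => a * Real.sin (s / a) + k * Real.cos (s / a))
      (Real.cos (x / a) - k / a * Real.sin (x / a)) x := by
    intro x
    refine (((hsin x).const_mul a).add ((hcos x).const_mul k)).congr_deriv ?_
    field_simp
    ring
  have hG : ∀ x : ℝ, HasDerivAt
      (fun s => (k + s) * (k * a * Real.sin (s / a) - a ^ 2 * Real.cos (s / a))
        + a ^ 2 * (a * Real.sin (s / a) + k * Real.cos (s / a)))
      ((k + x) * (a * Real.sin (x / a) + k * Real.cos (x / a))) x := by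
    intro x
    refine ((((hasDerivAt_id x).const_add k).mul (hPhi x)).add
      ((hphi x).const_mul (a ^ 2))).congr_deriv ?_
    simp only [id]
    field_simp
    ring
  have hc : Continuous fun s : ℝ => min (k + t) (k + s) *
      (a * Real.sin (s / a) + k * Real.cos (s / a)) := by fun_prop
  rw [← integral_add_adjacent_intervals (hc.intervalIntegrable 0 t) (hc.intervalIntegrable t T)]
  have h1 : (∫ s in (0 : ℝ)..t, min (k + t) (k + s) *
      (a * Real.sin (s / a) + k * Real.cos (s / a))) =
      ∫ s in (0 : ℝ)..t, (k + s) * (a * Real.sin (s / a) + k * Real.cos (s / a)) := by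
    refine integral_congr fun s hs => ?_
    rw [Set.uIcc_of_le ht0] at hs
    simp only [min_eq_right (add_le_add_right hs.2 k)]
  have h2 : (∫ s in t..T, min (k + t) (k + s) *
      (a * Real.sin (s / a) + k * Real.cos (s / a))) =
      ∫ s in t..T, (k + t) * (a * Real.sin (s / a) + k * Real.cos (s / a)) := by
    refine integral_congr fun s hs => ?_
    rw [Set.uIcc_of_le htT] at hs
    simp only [min_eq_left (add_le_add_right hs.1 k)]
  rw [h1, h2, intervalIntegral.integral_const_mul,
    integral_eq_sub_of_hasDerivAt (fun x _ => hG x)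
      (Continuous.intervalIntegrable (by fun_prop) _ _),
    integral_eq_sub_of_hasDerivAt (fun x _ => hPhi x)
      (Continuous.intervalIntegrable (by fun_prop) _ _)]
  simp only [zero_div, Real.sin_zero, Real.cos_zero]
  linear_combination (-(k + t) * a) * hroot
end

section
/- Let T > 0, k ≥ 0, and for ℓ ≥ 1 let λ_ℓ^{(k)} = T²/(x_ℓ^{(k)})², where x_ℓ^{(k)} is the unique solution of cot(x) = (k/T)·x in ((ℓ-1)π, ℓπ). Define c_ℓ^{(k)} = λ_ℓ^{(k)} · ((2ℓ-1)π/(2T))². Then c_ℓ^{(k)} ≥ 1 for all ℓ ≥ 1; c_ℓ^{(k)} < ((2ℓ-1)/(2ℓ-2))² for all ℓ ≥ 2; and if k = 0 then c_ℓ^{(0)} = 1 for all ℓ ≥ 1 (so that λ_ℓ^{(0)} = 4T²/((2ℓ-1)²π²) are the classical eigenvalues of the Wiener process on [0,T]). -/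
theorem cot_aux (n : ℕ) (x : ℝ) (h1 : (n : ℝ) * Real.pi < x) (h2 : x < ((n : ℝ) + 1) * Real.pi) :
    (0 ≤ Real.cot x → x ≤ (2 * (n : ℝ) + 1) * Real.pi / 2) ∧
    (Real.cot x = 0 → x = (2 * (n : ℝ) + 1) * Real.pi / 2) := by
  obtain ⟨y, rfl⟩ : ∃ y, x = y + n * Real.pi := ⟨x - n * Real.pi, by ring⟩
  have hy0 : 0 < y := by linarith
  have hy1 : y < Real.pi := by linarith
  have hs : 0 < Real.sin y := Real.sin_pos_of_pos_of_lt_pi hy0 hy1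
  have hcot : Real.cot (y + n * Real.pi) = Real.cos y / Real.sin y := by
    rw [Real.cot_eq_cos_div_sin, Real.sin_add_nat_mul_pi, Real.cos_add_nat_mul_pi]
    exact mul_div_mul_left _ _ (pow_ne_zero _ (by norm_num))
  rw [hcot]
  have key : 0 ≤ Real.cos y / Real.sin y → y ≤ Real.pi / 2 := by
    intro h
    by_contra! hlt
    have : Real.cos y < 0 := Real.cos_neg_of_pi_div_two_lt_of_lt hlt (by linarith)
    exact absurd h (not_le.mpr (div_neg_of_neg_of_pos this hs))
  refine ⟨fun h => by linarith [key h], fun h => ?_⟩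
  have hle := key h.ge
  have hge : Real.pi / 2 ≤ y := by
    by_contra! hlt
    have : 0 < Real.cos y := Real.cos_pos_of_mem_Ioo ⟨by linarith, hlt⟩
    exact absurd h (div_pos this hs).ne'
  linarith

/-- Bounds for the normalized eigenvalues `c ℓ = λ ℓ · ((2ℓ-1)π/(2T))²` of the
GSP-Wiener process: `c ℓ ≥ 1`, `c ℓ < ((2ℓ-1)/(2ℓ-2))²` for `ℓ ≥ 2`, and
`c ℓ = 1` for all `ℓ` when `k = 0` (classical Wiener eigenvalues). -/
theorem gsp_wiener_normalized_eigenvalue_bounds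
    (T k : ℝ) (hT : 0 < T) (hk : 0 ≤ k) (x lam c : ℕ → ℝ)
    (hx : ∀ ℓ : ℕ, 1 ≤ ℓ →
      x ℓ ∈ Set.Ioo (((ℓ : ℝ) - 1) * Real.pi) ((ℓ : ℝ) * Real.pi) ∧
        Real.cot (x ℓ) = (k / T) * x ℓ)
    (hlam : ∀ ℓ : ℕ, 1 ≤ ℓ → lam ℓ = T ^ 2 / (x ℓ) ^ 2)
    (hc : ∀ ℓ : ℕ, 1 ≤ ℓ →
      c ℓ = lam ℓ * ((2 * (ℓ : ℝ) - 1) * Real.pi / (2 * T)) ^ 2) :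
    (∀ ℓ : ℕ, 1 ≤ ℓ → 1 ≤ c ℓ) ∧
    (∀ ℓ : ℕ, 2 ≤ ℓ →
      c ℓ < ((2 * (ℓ : ℝ) - 1) / (2 * (ℓ : ℝ) - 2)) ^ 2) ∧
    (k = 0 → ∀ ℓ : ℕ, 1 ≤ ℓ → c ℓ = 1 ∧
      lam ℓ = 4 * T ^ 2 / ((2 * (ℓ : ℝ) - 1) ^ 2 * Real.pi ^ 2)) := by
  have main : ∀ ℓ : ℕ, 1 ≤ ℓ → 0 < x ℓ ∧ ((ℓ : ℝ) - 1) * Real.pi < x ℓ ∧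
      x ℓ ≤ (2 * (ℓ : ℝ) - 1) * Real.pi / 2 ∧
      (k = 0 → x ℓ = (2 * (ℓ : ℝ) - 1) * Real.pi / 2) ∧
      c ℓ = ((2 * (ℓ : ℝ) - 1) * Real.pi / 2 / x ℓ) ^ 2 := by
    intro ℓ hℓ
    obtain ⟨⟨ha, hb⟩, hcot⟩ := hx ℓ hℓ
    have hℓ' : (1 : ℝ) ≤ ℓ := by exact_mod_cast hℓ
    have hpos : 0 < x ℓ :=
      lt_of_le_of_lt (mul_nonneg (by linarith) Real.pi_pos.le) ha
    have hn : ((ℓ - 1 : ℕ) : ℝ) = (ℓ : ℝ) - 1 := by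
      rw [Nat.cast_sub hℓ, Nat.cast_one]
    have haux := cot_aux (ℓ - 1) (x ℓ) (by rw [hn]; exact ha)
      (by rw [hn]; linarith)
    rw [hn] at haux
    refine ⟨hpos, ha, ?_, ?_, ?_⟩
    · have := haux.1 (by rw [hcot]; positivity)
      linarith
    · intro hk0
      have := haux.2 (by rw [hcot, hk0]; simp)
      linarith
    · rw [hc ℓ hℓ, hlam ℓ hℓ]
      field_simp
  refine ⟨?_, ?_, ?_⟩
  · intro ℓ hℓ
    obtain ⟨hpos, -, hle, -, hcl⟩ := main ℓ hℓ
    rw [hcl]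
    exact one_le_pow₀ ((one_le_div hpos).mpr hle)
  · intro ℓ hℓ
    obtain ⟨hpos, ha, -, -, hcl⟩ := main ℓ (by omega)
    have hℓ' : (2 : ℝ) ≤ ℓ := by exact_mod_cast hℓ
    rw [hcl]
    have hpi := Real.pi_pos
    have h1 : 0 < 2 * (ℓ : ℝ) - 1 := by linarith
    apply pow_lt_pow_left₀ _ (by positivity) (by norm_num)
    rw [div_lt_div_iff₀ hpos (by linarith)]
    nlinarith [mul_lt_mul_of_pos_left ha h1]
  · intro hk0 ℓ hℓ
    obtain ⟨hpos, -, -, heq, hcl⟩ := main ℓ hℓ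
    have hxe := heq hk0
    refine ⟨?_, ?_⟩
    · rw [hcl, ← hxe, div_self hpos.ne', one_pow]
    · have hℓ' : (1 : ℝ) ≤ ℓ := by exact_mod_cast hℓ
      have h1 : 2 * (ℓ : ℝ) - 1 ≠ 0 := by linarith
      have hpi := Real.pi_pos.ne'
      rw [hlam ℓ hℓ, hxe]
      field_simp
      try norm_num
end

section
/- Let T > 0, k ≥ 0, and for ℓ ≥ 1 let λ_ℓ^{(k)} = T²/(x_ℓ^{(k)})², where x_ℓ^{(k)} is the unique solution of cot(x) = (k/T)·x in ((ℓ-1)π, ℓπ). Then the normalized sequence c_ℓ^{(k)} = λ_ℓ^{(k)} · ((2ℓ-1)π/(2T))² converges to 1 as ℓ → ∞; equivalently, ℓ²π²·λ_ℓ^{(k)} → T² as ℓ → ∞. -/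
open Filter

/-- The normalized eigenvalue sequence `c ℓ = λ ℓ · ((2ℓ-1)π/(2T))²` of the
GSP-Wiener process converges to `1`; equivalently `ℓ²π²·λ ℓ → T²`. -/
theorem gsp_wiener_normalized_eigenvalues_tendsto_one
    (T k : ℝ) (hT : 0 < T) (hk : 0 ≤ k) (x lam : ℕ → ℝ)
    (hx : ∀ ℓ : ℕ, 1 ≤ ℓ →
      x ℓ ∈ Set.Ioo (((ℓ : ℝ) - 1) * Real.pi) ((ℓ : ℝ) * Real.pi) ∧
        Real.cot (x ℓ) = (k / T) * x ℓ)
    (hlam : ∀ ℓ : ℕ, 1 ≤ ℓ → lam ℓ = T ^ 2 / (x ℓ) ^ 2) :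
    Tendsto (fun ℓ : ℕ =>
        lam ℓ * ((2 * (ℓ : ℝ) - 1) * Real.pi / (2 * T)) ^ 2)
      atTop (nhds 1) ∧
    Tendsto (fun ℓ : ℕ => (ℓ : ℝ) ^ 2 * Real.pi ^ 2 * lam ℓ)
      atTop (nhds (T ^ 2)) := by
  have hpi := Real.pi_pos
  have hinv : Tendsto (fun ℓ : ℕ => 1 / (ℓ : ℝ)) atTop (nhds 0) :=
    tendsto_one_div_atTop_nhds_zero_nat
  have h1 : Tendsto (fun ℓ : ℕ => x ℓ / (ℓ : ℝ)) atTop (nhds Real.pi) := by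
    have hlow : Tendsto (fun ℓ : ℕ => (1 - 1 / (ℓ : ℝ)) * Real.pi) atTop (nhds Real.pi) := by
      simpa using (hinv.const_sub 1).mul_const Real.pi
    refine tendsto_of_tendsto_of_tendsto_of_le_of_le' hlow tendsto_const_nhds ?_ ?_
    · filter_upwards [eventually_ge_atTop 1] with ℓ hℓ
      have hl : (0 : ℝ) < ℓ := by exact_mod_cast hℓ
      rw [le_div_iff₀ hl]
      have h := (hx ℓ hℓ).1.1
      have e : (1 - 1 / (ℓ : ℝ)) * Real.pi * ℓ = ((ℓ : ℝ) - 1) * Real.pi := by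
        field_simp
      linarith
    · filter_upwards [eventually_ge_atTop 1] with ℓ hℓ
      have hl : (0 : ℝ) < ℓ := by exact_mod_cast hℓ
      rw [div_le_iff₀ hl]
      have h := (hx ℓ hℓ).1.2
      linarith
  have h2 : Tendsto (fun ℓ : ℕ => Real.pi ^ 2 / (x ℓ / (ℓ : ℝ)) ^ 2) atTop (nhds 1) := by
    have h := (tendsto_const_nhds (x := Real.pi ^ 2)).div (h1.pow 2) (by positivity)
    rwa [div_self (by positivity)] at h
  have hxpos : ∀ ℓ : ℕ, 1 ≤ ℓ → 0 < x ℓ := by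
    intro ℓ hℓ
    have hl : (1 : ℝ) ≤ ℓ := by exact_mod_cast hℓ
    have h := (hx ℓ hℓ).1.1
    have h' : 0 ≤ ((ℓ : ℝ) - 1) * Real.pi := mul_nonneg (by linarith) hpi.le
    linarith
  constructor
  · have h3 : Tendsto (fun ℓ : ℕ => (1 - 1 / (ℓ : ℝ) / 2) ^ 2) atTop (nhds 1) := by
      simpa using ((hinv.div_const 2).const_sub 1).pow 2
    have h4 := h3.mul h2
    rw [mul_one] at h4
    refine h4.congr' ?_
    filter_upwards [eventually_ge_atTop 1] with ℓ hℓ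
    have hl : (0 : ℝ) < ℓ := by exact_mod_cast hℓ
    have hp := hxpos ℓ hℓ
    rw [hlam ℓ hℓ]
    field_simp
  · have h4 := h2.const_mul (T ^ 2)
    rw [mul_one] at h4
    refine h4.congr' ?_
    filter_upwards [eventually_ge_atTop 1] with ℓ hℓ
    have hl : (0 : ℝ) < ℓ := by exact_mod_cast hℓ
    have hp := hxpos ℓ hℓ
    rw [hlam ℓ hℓ]
    field_simp
end

section
/- Let T > 0 and k > 0, and for ℓ ≥ 1 let x_ℓ^{(k)} be the unique solution of cot(x) = (k/T)·x in ((ℓ-1)π, ℓπ). Then x_ℓ^{(k)} − (ℓ-1)π → 0 as ℓ → ∞. -/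
open Filter

/-- For `k > 0`, the unique root `x ℓ` of `cot x = (k/T)·x` in `((ℓ-1)π, ℓπ)`
satisfies `x ℓ - (ℓ-1)π → 0` as `ℓ → ∞`. -/
theorem gsp_wiener_cot_root_asymptotics
    (T k : ℝ) (hT : 0 < T) (hk : 0 < k) (x : ℕ → ℝ)
    (hx : ∀ ℓ : ℕ, 1 ≤ ℓ →
      x ℓ ∈ Set.Ioo (((ℓ : ℝ) - 1) * Real.pi) ((ℓ : ℝ) * Real.pi) ∧
        Real.cot (x ℓ) = (k / T) * x ℓ) :
    Tendsto (fun ℓ : ℕ => x ℓ - ((ℓ : ℝ) - 1) * Real.pi) atTop (nhds 0) := by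
  rw [← tendsto_add_atTop_iff_nat 1]
  have hc : 0 < k / T := div_pos hk hT
  have hlim : Tendsto (fun n : ℕ => (1 / (k / T)) / (n : ℝ)) atTop (nhds 0) :=
    tendsto_const_div_atTop_nhds_zero_nat _
  refine tendsto_of_tendsto_of_tendsto_of_le_of_le' tendsto_const_nhds hlim ?_ ?_
  · refine Eventually.of_forall fun n => ?_
    have h := (hx (n + 1) (by omega)).1.1
    show (0 : ℝ) ≤ x (n + 1) - (((n + 1 : ℕ) : ℝ) - 1) * Real.pi
    linarith
  · filter_upwards [eventually_ge_atTop 1] with n hn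
    obtain ⟨⟨h1, h2⟩, h3⟩ := hx (n + 1) (by omega)
    have hn' : (1 : ℝ) ≤ n := by exact_mod_cast hn
    push_cast at h1 h2 ⊢
    rw [add_sub_cancel_right] at h1 ⊢
    obtain ⟨y, hy⟩ : ∃ y, y = x (n + 1) - n * Real.pi := ⟨_, rfl⟩
    rw [← hy]
    have hxy : x (n + 1) = y + n * Real.pi := by rw [hy]; ring
    have hpi := Real.pi_gt_three
    have hy0 : 0 < y := by linarith
    have hyp : y < Real.pi := by linarith
    have hs : 0 < Real.sin y := Real.sin_pos_of_pos_of_lt_pi hy0 hyp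
    have hcot : Real.cos y / Real.sin y = (k / T) * x (n + 1) := by
      rw [← h3, hxy, Real.cot_eq_cos_div_sin, Real.cos_add_nat_mul_pi, Real.sin_add_nat_mul_pi]
      rw [mul_div_mul_left]
      exact pow_ne_zero _ (by norm_num)
    have hxn : (n : ℝ) ≤ x (n + 1) := by nlinarith
    have hxpos : 0 < x (n + 1) := by linarith
    have hcos : Real.cos y = (k / T) * x (n + 1) * Real.sin y := by
      rw [← hcot]; field_simp
    have hcpos : 0 < Real.cos y := by rw [hcos]; positivity
    have hy2 : y < Real.pi / 2 := by
      by_contra hcon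
      have := Real.cos_nonpos_of_pi_div_two_le_of_le (not_lt.mp hcon) (by linarith)
      linarith
    have ht := Real.lt_tan hy0 hy2
    rw [Real.tan_eq_sin_div_cos, lt_div_iff₀ hcpos, hcos] at ht
    have h5 : y * ((k / T) * x (n + 1)) < 1 := by
      by_contra hcon
      nlinarith [mul_le_mul_of_nonneg_right (not_lt.mp hcon) hs.le]
    have h6 : y * ((k / T) * n) ≤ y * ((k / T) * x (n + 1)) := by gcongr
    rw [div_div, le_div_iff₀ (by positivity)]
    linarith
end

section
/- Let T > 0 and k ≥ 0, and let Z be a GSP-Wiener process on [0,T], i.e. a centered Gaussian process with covariance K(t,s) = min(k+t, k+s), with almost surely continuous paths, viewed as a random variable with values in L²([0,T]). Then the quadratic quantization error satisfies e_n(Z) = Θ((ln n)^{-1/2}): there exist constants 0 < C₁ ≤ C₂ and N ∈ ℕ such that for all n ≥ N, C₁·(ln n)^{-1/2} ≤ e_n(Z) ≤ C₂·(ln n)^{-1/2}. -/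
open MeasureTheory ProbabilityTheory Filter

/-- The `n`-th quadratic quantization error of an `H`-valued random variable:
the infimum over all codebooks `α ⊆ H` with `|α| ≤ n` of
`(E min_{a∈α} ‖X - a‖²)^{1/2}`. -/
noncomputable def quantErr {Ω : Type*} [MeasurableSpace Ω] (P : Measure Ω)
    {H : Type*} [NormedAddCommGroup H] (X : Ω → H) (n : ℕ) : ℝ :=
  sInf { r : ℝ | ∃ α : Finset H, ∃ hα : α.Nonempty, α.card ≤ n ∧
    r = Real.sqrt (∫ ω, α.inf' hα (fun a => ‖X ω - a‖ ^ 2) ∂P) }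
/-- Gaussian finite-dimensional laws with covariance `min (k+t) (k+s)` on `[0,T]`. -/
def GaussK {Ω : Type*} [MeasurableSpace Ω] (P : Measure Ω) (T k : ℝ) (Z : ℝ → Ω → ℝ) : Prop :=
  ∀ (m : ℕ) (t : Fin m → ℝ), (∀ i, t i ∈ Set.Icc 0 T) →
      ∀ c : Fin m → ℝ,
        Measure.map (fun ω => ∑ i, c i * Z (t i) ω) P =
          gaussianReal 0
            (∑ i, ∑ j, c i * c j * min (k + t i) (k + t j)).toNNReal

lemma GaussK.law {Ω : Type*} [MeasurableSpace Ω] {P : Measure Ω} {T k : ℝ} {Z : ℝ → Ω → ℝ}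
    (h : GaussK P T k Z) {ι : Type} [Fintype ι] (t : ι → ℝ) (ht : ∀ i, t i ∈ Set.Icc 0 T)
    (c : ι → ℝ) :
    Measure.map (fun ω => ∑ i, c i * Z (t i) ω) P =
          gaussianReal 0
            (∑ i, ∑ j, c i * c j * min (k + t i) (k + t j)).toNNReal := by
  have e := (Fintype.equivFin ι).symm
  have := h _ (t ∘ e) (fun i => ht _) (c ∘ e)
  have h1 : ∀ ω, ∑ i, (c ∘ e) i * Z ((t ∘ e) i) ω = ∑ i, c i * Z (t i) ω := fun ω =>
    e.sum_comp (fun i => c i * Z (t i) ω)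
  have h2 : (∑ i, ∑ j, (c ∘ e) i * (c ∘ e) j * min (k + (t ∘ e) i) (k + (t ∘ e) j))
      = ∑ i, ∑ j, c i * c j * min (k + t i) (k + t j) := by
    rw [← e.sum_comp]
    refine Finset.sum_congr rfl fun i _ => ?_
    exact e.sum_comp (fun j => c (e i) * c j * min (k + t (e i)) (k + t j))
  rw [h2] at this
  simp_rw [h1] at this
  exact this

/-- A jointly measurable version of the process. -/
lemma exists_nice {Ω : Type*} [MeasurableSpace Ω] (P : Measure Ω) [IsProbabilityMeasure P]
    (T k : ℝ) (hT : 0 < T) (Z : ℝ → Ω → ℝ) (hG : GaussK P T k Z)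
    (hcont : ∀ᵐ ω ∂P, ContinuousOn (fun t => Z t ω) (Set.Icc 0 T)) :
    ∃ Z' : ℝ → Ω → ℝ, Measurable (Function.uncurry Z') ∧ GaussK P T k Z' ∧
      ∀ᵐ ω ∂P, ∀ t ∈ Set.Icc 0 T, Z' t ω = Z t ω := by
  classical
  have hae : ∀ t ∈ Set.Icc 0 T, AEMeasurable (Z t) P := by
    intro t ht
    by_contra hne
    have := hG.law (fun _ : Unit => t) (fun _ => ht) (fun _ => 1)
    simp only [Finset.univ_unique, Finset.sum_const, Finset.card_singleton, one_smul, one_mul] at this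
    rw [Measure.map_of_not_aemeasurable hne] at this
    exact (IsProbabilityMeasure.ne_zero _) this.symm
  let cl : ℝ → ℝ := fun t => max 0 (min t T)
  have hcl : ∀ t, cl t ∈ Set.Icc 0 T := fun t => ⟨le_max_left _ _, max_le hT.le (min_le_right _ _)⟩
  have hclc : Continuous cl := by fun_prop
  have hcl' : ∀ t ∈ Set.Icc 0 T, cl t = t := fun t ht => by
    simp [cl, min_eq_left ht.2, max_eq_right ht.1]
  have hall : ∀ᵐ ω ∂P, ContinuousOn (fun t => Z t ω) (Set.Icc 0 T) ∧
      ∀ q : ℚ, Z (cl q) ω = (hae (cl q) (hcl q)).mk (Z (cl q)) ω := by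
    refine hcont.and ?_
    rw [ae_all_iff]
    intro q
    exact (hae (cl q) (hcl q)).ae_eq_mk
  obtain ⟨G, hGae, hGm, hGp⟩ := hall.exists_measurable_mem
  let Z' : ℝ → Ω → ℝ := fun t ω => G.indicator (fun ω => Z (cl t) ω) ω
  have hZc : ∀ ω, Continuous fun t => Z' t ω := by
    intro ω
    by_cases h : ω ∈ G
    · simp only [Z', Set.indicator_of_mem h]
      exact (hGp ω h).1.comp_continuous hclc hcl
    · simp only [Z', Set.indicator_of_notMem h]
      exact continuous_const
  have hZq : ∀ q : ℚ, Measurable (Z' q) := by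
    intro q
    have : Z' q = G.indicator ((hae (cl q) (hcl q)).mk (Z (cl q))) := by
      ext ω
      by_cases h : ω ∈ G
      · simp only [Z', Set.indicator_of_mem h]; exact (hGp ω h).2 q
      · simp only [Z', Set.indicator_of_notMem h]
    rw [this]
    exact (AEMeasurable.measurable_mk _).indicator hGm
  have hZm : ∀ t, Measurable (Z' t) := by
    intro t
    obtain ⟨u, -, -, hu⟩ := Real.exists_seq_rat_strictMono_tendsto t
    refine measurable_of_tendsto_metrizable (fun n => hZq (u n)) ?_
    rw [tendsto_pi_nhds]
    intro ω
    exact ((hZc ω).tendsto t).comp hu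
  have hEq : ∀ᵐ ω ∂P, ∀ t ∈ Set.Icc 0 T, Z' t ω = Z t ω := by
    filter_upwards [hGae] with ω h t ht
    simp only [Z', Set.indicator_of_mem h, hcl' t ht]
  refine ⟨Z', measurable_uncurry_of_continuous_of_measurable hZc hZm, ?_, hEq⟩
  intro m t ht c
  rw [← hG m t ht c]
  refine Measure.map_congr ?_
  filter_upwards [hEq] with ω h
  exact Finset.sum_congr rfl fun i _ => by rw [h _ (ht i)]

lemma ofReal_norm_sq {Ω : Type*} [MeasurableSpace Ω] (P : Measure Ω)
    (T : ℝ) (Z : ℝ → Ω → ℝ)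
    (X : Ω → Lp ℝ 2 (volume.restrict (Set.Icc 0 T)))
    (hXZ : ∀ᵐ ω ∂P,
      (X ω : ℝ → ℝ) =ᵐ[volume.restrict (Set.Icc 0 T)] fun t => Z t ω) :
    ∀ᵐ ω ∂P, ∀ a : Lp ℝ 2 (volume.restrict (Set.Icc 0 T)),
      ENNReal.ofReal (‖X ω - a‖ ^ 2) =
        ∫⁻ t in Set.Icc 0 T, ENNReal.ofReal ((Z t ω - a t) ^ 2) := by
  filter_upwards [hXZ] with ω h a
  have h1 : ‖X ω - a‖ ^ 2 = ∫ t in Set.Icc 0 T, ((X ω - a : Lp ℝ 2 _) t) ^ 2 := by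
    rw [← real_inner_self_eq_norm_sq, L2.inner_def]
    refine integral_congr_ae (ae_of_all _ fun t => ?_)
    simp [pow_two]
  have h2 : Integrable (fun t => ((X ω - a : Lp ℝ 2 _) t) ^ 2) (volume.restrict (Set.Icc 0 T)) :=
    (Lp.memLp (X ω - a)).integrable_sq
  rw [h1, ofReal_integral_eq_lintegral_ofReal h2 (ae_of_all _ fun t => sq_nonneg _)]
  refine lintegral_congr_ae ?_
  filter_upwards [h, Lp.coeFn_sub (X ω) a] with t h3 h4
  rw [h4, Pi.sub_apply, h3]

/-- Law of weighted sums of increments over essentially disjoint intervals plus initial value. -/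
lemma GaussK.incr {Ω : Type*} [MeasurableSpace Ω] {P : Measure Ω} {T k : ℝ} {Z : ℝ → Ω → ℝ}
    (h : GaussK P T k Z) (hT : 0 < T) {ι : Type} [Fintype ι] (u v : ι → ℝ)
    (hu : ∀ i, 0 ≤ u i) (hv : ∀ i, v i ≤ T) (huv : ∀ i, u i ≤ v i)
    (hd : ∀ i j, i ≠ j → v i ≤ u j ∨ v j ≤ u i) (c0 : ℝ) (c : ι → ℝ) :
    Measure.map (fun ω => c0 * Z 0 ω + ∑ i, c i * (Z (v i) ω - Z (u i) ω)) P =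
      gaussianReal 0 (c0 ^ 2 * k + ∑ i, c i ^ 2 * (v i - u i)).toNNReal := by
  have := h.law (ι := Option (ι ⊕ ι)) (fun x => x.elim 0 (Sum.elim v u)) (by
    rintro (_ | i | i)
    · exact ⟨le_rfl, hT.le⟩
    · exact ⟨(hu i).trans (huv i), hv i⟩
    · exact ⟨hu i, (huv i).trans (hv i)⟩) (fun x => x.elim c0 (Sum.elim c (fun i => - c i)))
  have e1 : ∀ ω, ∑ i : Option (ι ⊕ ι), (i.elim c0 (Sum.elim c (fun i => - c i))) *
      Z (i.elim 0 (Sum.elim v u)) ω = c0 * Z 0 ω + ∑ i, c i * (Z (v i) ω - Z (u i) ω) := by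
    intro ω
    simp only [Fintype.sum_option, Fintype.sum_sum_type, Option.elim_none, Option.elim_some,
      Sum.elim_inl, Sum.elim_inr]
    rw [← Finset.sum_add_distrib]
    congr 1
    exact Finset.sum_congr rfl fun i _ => by ring
  simp_rw [e1] at this
  rw [this]
  congr 2
  simp only [Fintype.sum_option, Fintype.sum_sum_type, Option.elim_none, Option.elim_some,
      Sum.elim_inl, Sum.elim_inr]
  have m1 : ∀ x, 0 ≤ x → min k (k + x) = k := fun x hx => by
    rw [min_eq_left] <;> linarith
  have m2 : ∀ x, 0 ≤ x → min (k + x) k = k := fun x hx => by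
    rw [min_eq_right] <;> linarith
  have hv0 : ∀ i, 0 ≤ v i := fun i => (hu i).trans (huv i)
  simp only [add_zero, min_self]
  simp only [m1 _ (hu _), m2 _ (hu _), m1 _ (hv0 _), m2 _ (hv0 _)]
  have key : ∀ i, ∑ j, (c i * c j * min (k + v i) (k + v j) + c i * -c j * min (k + v i) (k + u j)
      + -c i * c j * min (k + u i) (k + v j) + -c i * -c j * min (k + u i) (k + u j))
      = c i ^ 2 * (v i - u i) := by
    intro i
    rw [Finset.sum_eq_single i]
    · rw [min_self, min_self, min_eq_right, min_eq_left] <;> [ring; linarith [huv i]; linarith [huv i]]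
    · intro j _ hj
      have := huv i
      have := huv j
      rcases hd i j hj.symm with h | h
      · rw [min_eq_left, min_eq_left, min_eq_left, min_eq_left] <;> [ring; linarith; linarith; linarith; linarith]
      · rw [min_eq_right, min_eq_right, min_eq_right, min_eq_right] <;> [ring; linarith; linarith; linarith; linarith]
    · simp
  rw [← Finset.sum_congr rfl fun i _ => key i]
  simp only [Finset.sum_add_distrib, mul_neg, neg_mul, Finset.sum_neg_distrib]
  ring

lemma lintegral_exp_gauss {Ω : Type*} [MeasurableSpace Ω] {P : Measure Ω} [IsProbabilityMeasure P]
    {Y : Ω → ℝ} {v : NNReal} (h : Measure.map Y P = gaussianReal 0 v) (hY : Measurable Y) :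
    ∫⁻ ω, ENNReal.ofReal (Real.exp (Y ω)) ∂P = ENNReal.ofReal (Real.exp (v / 2)) := by
  have h1 := mgf_gaussianReal h 1
  simp only [mgf, one_mul, zero_add, one_pow, mul_one] at h1
  have h2 : Integrable (fun ω => Real.exp (Y ω)) P := by
    have := integrable_exp_mul_gaussianReal (μ := 0) (v := v) 1
    rw [← h] at this
    simp only [one_mul] at this
    exact this.comp_measurable hY
  rw [← ofReal_integral_eq_lintegral_ofReal h2 (ae_of_all _ fun t => (Real.exp_pos _).le), h1]

lemma measurable_inf'_fun {Ω A : Type*} [MeasurableSpace Ω] (α : Finset A) (hα : α.Nonempty)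
    (Q : A → Ω → ℝ) (hQ : ∀ a, Measurable (Q a)) :
    Measurable fun ω => α.inf' hα fun a => Q a ω := by
  induction hα using Finset.Nonempty.cons_induction with
  | singleton a => simpa using hQ a
  | cons a s ha hs ih =>
    simp only [Finset.inf'_cons hs]
    exact (hQ a).inf ih

lemma gauss_small (h : ℝ) (hh : 0 < h) (b : ℝ) :
    ∫⁻ x, ENNReal.ofReal (Real.exp (-(2 / h) * (x - b) ^ 2)) ∂(gaussianReal 0 h.toNNReal)
      ≤ ENNReal.ofReal (1 / 2) := by
  have hv : h.toNNReal ≠ 0 := by simpa using hh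
  rw [gaussianReal_of_var_ne_zero _ hv,
    lintegral_withDensity_eq_lintegral_mul _ (measurable_gaussianPDF _ _) (by fun_prop)]
  have hb : 0 < 2 / h := by positivity
  have hint : Integrable (fun x : ℝ => Real.exp (-(2 / h) * (x - b) ^ 2)) :=
    (integrable_exp_neg_mul_sq hb).comp_sub_right b
  calc ∫⁻ x, (gaussianPDF 0 h.toNNReal *
          fun x => ENNReal.ofReal (Real.exp (-(2 / h) * (x - b) ^ 2))) x
      ≤ ∫⁻ x, ENNReal.ofReal ((Real.sqrt (2 * Real.pi * h))⁻¹) *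
          ENNReal.ofReal (Real.exp (-(2 / h) * (x - b) ^ 2)) := by
        refine lintegral_mono fun x => ?_
        simp only [Pi.mul_apply]
        gcongr
        rw [gaussianPDF, gaussianPDFReal]
        refine ENNReal.ofReal_le_ofReal ?_
        rw [Real.coe_toNNReal _ hh.le]
        have : Real.exp (-(x - 0) ^ 2 / (2 * h)) ≤ 1 := by
          rw [Real.exp_le_one_iff]
          apply div_nonpos_of_nonpos_of_nonneg <;> nlinarith [sq_nonneg (x - 0)]
        exact mul_le_of_le_one_right (by positivity) this
    _ = ENNReal.ofReal ((Real.sqrt (2 * Real.pi * h))⁻¹) *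
          ENNReal.ofReal (∫ x : ℝ, Real.exp (-(2 / h) * (x - b) ^ 2)) := by
        rw [lintegral_const_mul _ (by fun_prop),
          ofReal_integral_eq_lintegral_ofReal hint (ae_of_all _ fun t => (Real.exp_pos _).le)]
    _ = ENNReal.ofReal (1 / 2) := by
        rw [← ENNReal.ofReal_mul (by positivity),
          integral_sub_right_eq_self (fun x : ℝ => Real.exp (-(2 / h) * x ^ 2)) b,
          integral_gaussian, ← Real.sqrt_inv, ← Real.sqrt_mul (by positivity)]
        congr 1
        rw [Real.sqrt_eq_iff_mul_self_eq (by positivity) (by positivity)]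
        have := Real.pi_pos
        field_simp

section lower
variable {Ω : Type*} [MeasurableSpace Ω] {P : Measure Ω} [IsProbabilityMeasure P]
  {T k : ℝ} {Z : ℝ → Ω → ℝ}

lemma lower_laplace (hG : GaussK P T k Z) (hZ : ∀ t, Measurable (Z t)) (hT : 0 < T) (d : ℕ) (h : ℝ)
    (hh : 0 < h) (u v : Fin d → ℝ)
    (hu : ∀ i, 0 ≤ u i) (hv : ∀ i, v i ≤ T) (huv : ∀ i, v i - u i = h)
    (hd : ∀ i j, i ≠ j → v i ≤ u j ∨ v j ≤ u i) (b : Fin d → ℝ) :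
    ∫⁻ ω, ENNReal.ofReal (Real.exp (-(2 / h) * ∑ j, (Z (v j) ω - Z (u j) ω - b j) ^ 2)) ∂P
      ≤ ENNReal.ofReal ((1 / 2) ^ d) := by
  have huv' : ∀ i, u i ≤ v i := fun i => by linarith [huv i]
  set Y : Fin d → Ω → ℝ := fun j ω => Z (v j) ω - Z (u j) ω with hY
  have hYm : ∀ j, Measurable (Y j) := fun j => (hZ _).sub (hZ _)
  have hlin : ∀ c : Fin d → ℝ, Measure.map (fun ω => ∑ j, c j * Y j ω) P =
      gaussianReal 0 (∑ j, c j ^ 2 * h).toNNReal := by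
    intro c
    have := hG.incr hT u v hu hv huv' hd 0 c
    simpa [huv] using this
  have hone : ∀ j, Measure.map (Y j) P = gaussianReal 0 h.toNNReal := by
    intro j
    have := hlin (Pi.single j 1)
    simpa [Pi.single_apply] using this
  have hind : iIndepFun Y P := by
    rw [iIndepFun_iff_charFun_pi (fun j => (hYm j).aemeasurable)]
    intro t
    have hL := hlin t
    have e1 : charFun (Measure.map (fun ω => WithLp.toLp 2 (fun j => Y j ω)) P) t
        = charFun (Measure.map (fun ω => ∑ j, t j * Y j ω) P) 1 := by
      rw [charFun_apply, charFun_apply, integral_map, integral_map]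
      · refine integral_congr_ae (ae_of_all _ fun ω => ?_)
        simp [PiLp.inner_apply]
      · fun_prop
      · fun_prop
      · fun_prop
      · fun_prop
    rw [e1, hL]
    simp_rw [hone, charFun_gaussianReal]
    rw [← Complex.exp_sum]
    congr 1
    rw [Real.coe_toNNReal _ (Finset.sum_nonneg fun i _ => by positivity), Real.coe_toNNReal _ hh.le]
    push_cast
    simp only [mul_zero, zero_mul, zero_sub, one_pow, mul_one, Finset.sum_neg_distrib]
    rw [Finset.sum_div]
    congr 1
    exact Finset.sum_congr rfl fun i _ => by ring
  have e2 : ∀ ω, ENNReal.ofReal (Real.exp (-(2 / h) * ∑ j, (Y j ω - b j) ^ 2))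
      = ∏ j, ENNReal.ofReal (Real.exp (-(2 / h) * (Y j ω - b j) ^ 2)) := by
    intro ω
    rw [Finset.mul_sum, Real.exp_sum, ENNReal.ofReal_prod_of_nonneg]
    intros; positivity
  change ∫⁻ ω, ENNReal.ofReal (Real.exp (-(2 / h) * ∑ j, (Y j ω - b j) ^ 2)) ∂P ≤ _
  simp_rw [e2]
  have hind2 := hind.comp (fun j x => ENNReal.ofReal (Real.exp (-(2 / h) * (x - b j) ^ 2)))
    (fun j => by fun_prop)
  have := lintegral_prod_eq_prod_lintegral_of_indepFun Finset.univ
    (fun j ω => ENNReal.ofReal (Real.exp (-(2 / h) * (Y j ω - b j) ^ 2))) hind2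
    (fun j => by have := hYm j; fun_prop)
  rw [this, ENNReal.ofReal_pow (by norm_num)]
  calc ∏ j, ∫⁻ ω, ENNReal.ofReal (Real.exp (-(2 / h) * (Y j ω - b j) ^ 2)) ∂P
      ≤ ∏ j : Fin d, ENNReal.ofReal (1 / 2) := by
        refine Finset.prod_le_prod' fun j _ => ?_
        rw [← lintegral_map (f := fun x => ENNReal.ofReal (Real.exp (-(2 / h) * (x - b j) ^ 2)))
          (by fun_prop) (hYm j), hone]
        exact gauss_small h hh _
    _ = _ := by simp

lemma lower_fixed (hG : GaussK P T k Z) (hZ : ∀ t, Measurable (Z t)) (hT : 0 < T) (d : ℕ) (h : ℝ)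
    (hh : 0 < h) (u v : Fin d → ℝ)
    (hu : ∀ i, 0 ≤ u i) (hv : ∀ i, v i ≤ T) (huv : ∀ i, v i - u i = h)
    (hd : ∀ i j, i ≠ j → v i ≤ u j ∨ v j ≤ u i) {A : Type*} (α : Finset A) (hα : α.Nonempty)
    (n : ℕ) (hn : α.card ≤ n) (hnd : n * Real.exp (-(d / 4)) ≤ 1 / 2) (b : A → Fin d → ℝ) :
    ENNReal.ofReal (d * h / 16) ≤
    ∫⁻ ω, ENNReal.ofReal (α.inf' hα fun a => ∑ j, (Z (v j) ω - Z (u j) ω - b a j) ^ 2) ∂P := by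
  set Q : A → Ω → ℝ := fun a ω => ∑ j, (Z (v j) ω - Z (u j) ω - b a j) ^ 2 with hQ
  have hQm : ∀ a, Measurable (Q a) := fun a =>
    Finset.measurable_sum _ fun j _ => (((hZ _).sub (hZ _)).sub_const _).pow_const _
  have hsingle : ∀ a, P {ω | Q a ω ≤ d * h / 8} ≤ ENNReal.ofReal (Real.exp (-(d / 4))) := by
    intro a
    have h1 := lower_laplace hG hZ hT d h hh u v hu hv huv hd (b a)
    have h2 := mul_meas_ge_le_lintegral (μ := P)
      (f := fun ω => ENNReal.ofReal (Real.exp (-(2 / h) * Q a ω))) (by have := hQm a; fun_prop)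
      (ENNReal.ofReal (Real.exp (-(d / 4))))
    have h3 : P {ω | Q a ω ≤ d * h / 8} ≤ P {ω | ENNReal.ofReal (Real.exp (-(d / 4))) ≤
        ENNReal.ofReal (Real.exp (-(2 / h) * Q a ω))} := by
      refine measure_mono fun ω hω => ?_
      refine ENNReal.ofReal_le_ofReal (Real.exp_le_exp.2 ?_)
      have : 2 / h * Q a ω ≤ 2 / h * (d * h / 8) := by
        have : Q a ω ≤ d * h / 8 := hω
        gcongr
      have e : 2 / h * (d * h / 8) = d / 4 := by field_simp; ring
      rw [e] at this
      linarith
    have h4 : ENNReal.ofReal (Real.exp (-(d / 4))) * P {ω | Q a ω ≤ d * h / 8} ≤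
        ENNReal.ofReal ((1 / 2) ^ d) := (mul_le_mul_right h3 _).trans (h2.trans h1)
    have h5 : P {ω | Q a ω ≤ d * h / 8} = ENNReal.ofReal (Real.exp (d / 4)) *
        (ENNReal.ofReal (Real.exp (-(d / 4))) * P {ω | Q a ω ≤ d * h / 8}) := by
      rw [← mul_assoc, ← ENNReal.ofReal_mul (by positivity), ← Real.exp_add]
      simp
    rw [h5]
    refine (mul_le_mul_right h4 _).trans ?_
    rw [← ENNReal.ofReal_mul (by positivity)]
    refine ENNReal.ofReal_le_ofReal ?_
    have h6 : ((1 : ℝ) / 2) ^ d ≤ Real.exp (-(d / 2)) := by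
      have : (1 : ℝ) / 2 ≤ Real.exp (-(1 / 2)) := by
        rw [← Real.log_le_iff_le_exp (by norm_num)]
        rw [Real.log_div (by norm_num) (by norm_num), Real.log_one]
        have := Real.log_two_gt_d9
        linarith
      calc ((1 : ℝ) / 2) ^ d ≤ (Real.exp (-(1 / 2))) ^ d := by gcongr
        _ = _ := by rw [← Real.exp_nat_mul]; congr 1; ring
    calc Real.exp (d / 4) * (1 / 2) ^ d ≤ Real.exp (d / 4) * Real.exp (-(d / 2)) := by gcongr
      _ = _ := by rw [← Real.exp_add]; congr 1; ring
  set m : Ω → ℝ := fun ω => α.inf' hα fun a => Q a ω with hm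
  have hmm : Measurable m := by
    exact measurable_inf'_fun α hα Q hQm
  have hbad : P {ω | m ω ≤ d * h / 8} ≤ ENNReal.ofReal (1 / 2) := by
    calc P {ω | m ω ≤ d * h / 8} ≤ P (⋃ a ∈ α, {ω | Q a ω ≤ d * h / 8}) := by
          refine measure_mono fun ω hω => ?_
          have : α.inf' hα (fun a => Q a ω) ≤ d * h / 8 := hω
          simpa [Finset.inf'_le_iff] using this
      _ ≤ ∑ a ∈ α, P {ω | Q a ω ≤ d * h / 8} := measure_biUnion_finset_le _ _
      _ ≤ ∑ a ∈ α, ENNReal.ofReal (Real.exp (-(d / 4))) := Finset.sum_le_sum fun a _ => hsingle a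
      _ = ENNReal.ofReal (α.card * Real.exp (-(d / 4))) := by
          rw [Finset.sum_const, nsmul_eq_mul, ENNReal.ofReal_mul (by positivity),
            ENNReal.ofReal_natCast]
      _ ≤ ENNReal.ofReal (1 / 2) := by
          refine ENNReal.ofReal_le_ofReal (le_trans ?_ hnd)
          gcongr
  have hgood : ENNReal.ofReal (1 / 2) ≤ P {ω | d * h / 8 ≤ m ω} := by
    have h1 : (1 : ENNReal) ≤ P {ω | m ω ≤ d * h / 8} + P {ω | d * h / 8 ≤ m ω} := by
      rw [← measure_univ (μ := P)]
      refine le_trans (measure_mono ?_) (measure_union_le _ _)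
      intro ω _
      exact le_total (m ω) (d * h / 8)
    have h2 : (1 : ENNReal) ≤ ENNReal.ofReal (1 / 2) + P {ω | d * h / 8 ≤ m ω} :=
      h1.trans (by gcongr)
    have h3 : (1 : ENNReal) = ENNReal.ofReal (1 / 2) + ENNReal.ofReal (1 / 2) := by
      rw [← ENNReal.ofReal_add (by norm_num) (by norm_num)]; norm_num
    rw [h3] at h2
    exact (ENNReal.add_le_add_iff_left ENNReal.ofReal_ne_top).1 h2
  have h7 := mul_meas_ge_le_lintegral (μ := P) (f := fun ω => ENNReal.ofReal (m ω)) (by fun_prop)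
      (ENNReal.ofReal (d * h / 8))
  refine le_trans ?_ h7
  calc ENNReal.ofReal (d * h / 16) = ENNReal.ofReal (d * h / 8) * ENNReal.ofReal (1 / 2) := by
        rw [← ENNReal.ofReal_mul (by positivity)]; congr 1; ring
    _ ≤ ENNReal.ofReal (d * h / 8) * P {ω | d * h / 8 ≤ m ω} := by gcongr
    _ ≤ _ := by
      gcongr with ω
      exact fun hx => ENNReal.ofReal_le_ofReal hx
end lower

lemma sum_range_two_mul (g : ℕ → ENNReal) (d : ℕ) :
    ∑ i ∈ Finset.range (2 * d), g i = ∑ j : Fin d, (g (2 * j) + g (2 * j + 1)) := by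
  rw [Fin.sum_univ_eq_sum_range (fun j => g (2 * j) + g (2 * j + 1))]
  induction d with
  | zero => simp
  | succ d ih =>
    rw [Finset.sum_range_succ, ← ih, show 2 * (d + 1) = 2 * d + 1 + 1 by ring,
      Finset.sum_range_succ, Finset.sum_range_succ]
    ring

lemma fold_lintegral (f : ℝ → ENNReal) (hf : Measurable f) (d : ℕ) (T h : ℝ) (hh : 0 < h)
    (hT : 2 * d * h = T) :
    ∫⁻ s in Set.Ico 0 h, ∑ j : Fin d, (f (s + 2 * j * h) + f (s + (2 * j * h + h))) ≤
      ∫⁻ t in Set.Icc 0 T, f t := by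
  have e1 : ∀ s, ∑ j : Fin d, (f (s + 2 * j * h) + f (s + (2 * j * h + h))) =
      ∑ i ∈ Finset.range (2 * d), f (s + i * h) := by
    intro s
    rw [sum_range_two_mul]
    refine Finset.sum_congr rfl fun j _ => ?_
    push_cast
    congr 2
    ring_nf
  simp_rw [e1]
  rw [lintegral_finsetSum _ (fun i _ => by fun_prop)]
  have e2 : ∀ i : ℕ, ∫⁻ s in Set.Ico 0 h, f (s + i * h) =
      ∫⁻ t in Set.Ico (i * h) (i * h + h), f t := by
    intro i
    have := (measurePreserving_add_right (volume : Measure ℝ) (i * h)).setLIntegral_comp_preimage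
      (s := Set.Ico (i * h) (i * h + h)) measurableSet_Ico hf
    rw [← this]
    congr 2
    ext x
    simp only [Set.mem_Ico, Set.mem_preimage]
    constructor <;> rintro ⟨h1, h2⟩ <;> constructor <;> linarith
  simp_rw [e2]
  rw [← lintegral_biUnion_finset]
  · refine lintegral_mono_set ?_
    intro x hx
    simp only [Set.mem_iUnion, Finset.mem_range, Set.mem_Ico] at hx
    obtain ⟨i, hi, h1, h2⟩ := hx
    have : ((i : ℝ) + 1) ≤ 2 * d := by exact_mod_cast hi
    refine ⟨le_trans (by positivity) h1, ?_⟩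
    nlinarith
  · intro i _ j _ hij
    simp only [Function.onFun]
    rw [Set.disjoint_left]
    rintro x ⟨h1, h2⟩ ⟨h3, h4⟩
    have a1 : (i : ℝ) < j + 1 := by by_contra hc; push Not at hc; nlinarith
    have a2 : (j : ℝ) < i + 1 := by by_contra hc; push Not at hc; nlinarith
    have a1' : i < j + 1 := by exact_mod_cast a1
    have a2' : j < i + 1 := by exact_mod_cast a2
    omega
  · intros; exact measurableSet_Ico

section lower2
variable {Ω : Type*} [MeasurableSpace Ω] {P : Measure Ω} [IsProbabilityMeasure P]
  {T k : ℝ} {Z : ℝ → Ω → ℝ}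

lemma lower_lintegral (hG : GaussK P T k Z) (hZ : Measurable (Function.uncurry Z)) (hT : 0 < T)
    (X : Ω → Lp ℝ 2 (volume.restrict (Set.Icc 0 T)))
    (hX : ∀ᵐ ω ∂P, ∀ a : Lp ℝ 2 (volume.restrict (Set.Icc 0 T)),
      ENNReal.ofReal (‖X ω - a‖ ^ 2) =
        ∫⁻ t in Set.Icc 0 T, ENNReal.ofReal ((Z t ω - a t) ^ 2))
    (d : ℕ) (hd : 0 < d)
    (α : Finset (Lp ℝ 2 (volume.restrict (Set.Icc 0 T)))) (hα : α.Nonempty)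
    (n : ℕ) (hn : α.card ≤ n) (hnd : n * Real.exp (-(d / 4)) ≤ 1 / 2) :
    ENNReal.ofReal (T ^ 2 / (128 * d)) ≤
      ∫⁻ ω, ENNReal.ofReal (α.inf' hα fun a => ‖X ω - a‖ ^ 2) ∂P := by
  have hd' : (0 : ℝ) < d := by exact_mod_cast hd
  set h : ℝ := T / (2 * d) with hh
  have hh0 : 0 < h := by positivity
  have hTh : 2 * d * h = T := by rw [hh]; field_simp
  have hZt : ∀ t, Measurable (Z t) := fun t => hZ.comp (measurable_const.prodMk measurable_id)
  set Q : Lp ℝ 2 (volume.restrict (Set.Icc 0 T)) → Ω × ℝ → ℝ := fun a p =>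
    ∑ j : Fin d, (Z (p.2 + (2 * j * h + h)) p.1 - Z (p.2 + 2 * j * h) p.1 -
      (a (p.2 + (2 * j * h + h)) - a (p.2 + 2 * j * h))) ^ 2 with hQ
  have ham : ∀ a : Lp ℝ 2 (volume.restrict (Set.Icc 0 T)), Measurable a := fun a =>
    (Lp.stronglyMeasurable a).measurable
  have hQm : ∀ a, Measurable (Q a) := by
    intro a
    refine Finset.measurable_sum _ fun j _ => ?_
    have h1 : ∀ c : ℝ, Measurable fun p : Ω × ℝ => Z (p.2 + c) p.1 := fun c =>
      hZ.comp ((measurable_snd.add_const c).prodMk measurable_fst)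
    have h2 : ∀ c : ℝ, Measurable fun p : Ω × ℝ => a (p.2 + c) := fun c =>
      (ham a).comp (measurable_snd.add_const c)
    exact (((h1 _).sub (h1 _)).sub ((h2 _).sub (h2 _))).pow_const 2
  have hmm := measurable_inf'_fun α hα Q hQm
  have step1 : ∀ᵐ ω ∂P, ∫⁻ s in Set.Ico 0 h, ENNReal.ofReal (1 / 2) *
      ENNReal.ofReal (α.inf' hα fun a => Q a (ω, s)) ≤
      ENNReal.ofReal (α.inf' hα fun a => ‖X ω - a‖ ^ 2) := by
    filter_upwards [hX] with ω hω
    obtain ⟨a, ha, hae⟩ := Finset.exists_mem_eq_inf' hα (fun a => ‖X ω - a‖ ^ 2)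
    rw [hae, hω a]
    have hfm : Measurable fun t => ENNReal.ofReal ((Z t ω - a t) ^ 2) := by
      have h1 : Measurable fun t => Z t ω := hZ.comp (measurable_id.prodMk measurable_const)
      exact ((h1.sub (ham a)).pow_const 2).ennreal_ofReal
    refine le_trans (lintegral_mono fun s => ?_) (fold_lintegral _ hfm d T h hh0 hTh)
    rw [← ENNReal.ofReal_mul (by norm_num)]
    have e : ∑ j : Fin d, (ENNReal.ofReal ((Z (s + 2 * j * h) ω - a (s + 2 * j * h)) ^ 2) +
        ENNReal.ofReal ((Z (s + (2 * j * h + h)) ω - a (s + (2 * j * h + h))) ^ 2)) =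
        ENNReal.ofReal (∑ j : Fin d, ((Z (s + 2 * j * h) ω - a (s + 2 * j * h)) ^ 2 +
        (Z (s + (2 * j * h + h)) ω - a (s + (2 * j * h + h))) ^ 2)) := by
      rw [ENNReal.ofReal_sum_of_nonneg (fun i _ => by positivity)]
      exact Finset.sum_congr rfl fun j _ => (ENNReal.ofReal_add (sq_nonneg _) (sq_nonneg _)).symm
    rw [e]
    refine ENNReal.ofReal_le_ofReal ?_
    have h1 : α.inf' hα (fun a => Q a (ω, s)) ≤ Q a (ω, s) := Finset.inf'_le _ ha
    refine (mul_le_mul_of_nonneg_left h1 (by norm_num)).trans ?_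
    rw [hQ, Finset.mul_sum]
    refine Finset.sum_le_sum fun j _ => ?_
    simp only
    nlinarith [sq_nonneg ((Z (s + 2 * j * h) ω - a (s + 2 * j * h)) +
      (Z (s + (2 * j * h + h)) ω - a (s + (2 * j * h + h))))]
  refine le_trans ?_ (lintegral_mono_ae step1)
  rw [lintegral_lintegral_swap (by
    exact (Measurable.aemeasurable (measurable_const.mul hmm.ennreal_ofReal)))]
  have step2 : ∀ s ∈ Set.Ico 0 h, ENNReal.ofReal (1 / 2) * ENNReal.ofReal (d * h / 16) ≤
      ∫⁻ ω, ENNReal.ofReal (1 / 2) * ENNReal.ofReal (α.inf' hα fun a => Q a (ω, s)) ∂P := by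
    intro s hs
    rw [lintegral_const_mul _ (by
      exact (hmm.comp (measurable_id.prodMk measurable_const)).ennreal_ofReal)]
    gcongr
    refine lower_fixed hG hZt hT d h hh0 (fun j => s + 2 * j * h) (fun j => s + (2 * j * h + h))
      (fun i => by have := hs.1; positivity) ?_ (fun i => by ring) ?_ α hα n hn hnd
      (fun a j => a (s + (2 * j * h + h)) - a (s + 2 * j * h))
    · intro i
      have : ((i : ℕ) : ℝ) + 1 ≤ d := by exact_mod_cast i.2
      have := hs.2
      nlinarith
    · intro i j hij
      have hij' : (i : ℕ) ≠ j := fun hc => hij (Fin.ext hc)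
      rcases lt_or_gt_of_ne hij' with hlt | hlt
      · left
        have : ((i : ℕ) : ℝ) + 1 ≤ (j : ℕ) := by exact_mod_cast hlt
        nlinarith
      · right
        have : ((j : ℕ) : ℝ) + 1 ≤ (i : ℕ) := by exact_mod_cast hlt
        nlinarith
  calc ENNReal.ofReal (T ^ 2 / (128 * d))
      = ∫⁻ s in Set.Ico 0 h, ENNReal.ofReal (1 / 2) * ENNReal.ofReal (d * h / 16) := by
        rw [setLIntegral_const, Real.volume_Ico, ← ENNReal.ofReal_mul (by norm_num),
          ← ENNReal.ofReal_mul (by positivity)]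
        congr 1
        rw [hh]; field_simp; ring
    _ ≤ _ := setLIntegral_mono' measurableSet_Ico step2

lemma lintegral_sq_gauss
    {Y : Ω → ℝ} {v : NNReal} (h : Measure.map Y P = gaussianReal 0 v) (hY : Measurable Y) :
    ∫⁻ ω, ENNReal.ofReal (Y ω ^ 2) ∂P = v := by
  rw [← lintegral_map (f := fun x : ℝ => ENNReal.ofReal (x ^ 2)) (by fun_prop) hY, h]
  have h1 := variance_id_gaussianReal (μ := 0) (v := v)
  have h2 : MemLp (id : ℝ → ℝ) 2 (gaussianReal 0 v) := memLp_id_gaussianReal 2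
  rw [variance_of_integral_eq_zero (by fun_prop) (by simp)] at h1
  rw [← ofReal_integral_eq_lintegral_ofReal (by simpa using h2.integrable_sq)
    (ae_of_all _ fun t => sq_nonneg _)]
  simp only [id_eq] at h1
  rw [h1]
  simp

lemma GaussK.one (hG : GaussK P T k Z) {t : ℝ} (ht : t ∈ Set.Icc 0 T) :
    Measure.map (Z t) P = gaussianReal 0 (k + t).toNNReal := by
  have := hG.law (fun _ : Unit => t) (fun _ => ht) (fun _ => 1)
  simpa using this

lemma lintegral_norm_lt_top (hG : GaussK P T k Z) (hZ : Measurable (Function.uncurry Z))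
    (X : Ω → Lp ℝ 2 (volume.restrict (Set.Icc 0 T)))
    (hX : ∀ᵐ ω ∂P, ∀ a : Lp ℝ 2 (volume.restrict (Set.Icc 0 T)),
      ENNReal.ofReal (‖X ω - a‖ ^ 2) =
        ∫⁻ t in Set.Icc 0 T, ENNReal.ofReal ((Z t ω - a t) ^ 2))
    (α : Finset (Lp ℝ 2 (volume.restrict (Set.Icc 0 T)))) (hα : α.Nonempty) :
    ∫⁻ ω, ENNReal.ofReal (α.inf' hα fun a => ‖X ω - a‖ ^ 2) ∂P < ⊤ := by
  obtain ⟨a, ha⟩ := hα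
  have hZt : ∀ t, Measurable (Z t) := fun t => hZ.comp (measurable_const.prodMk measurable_id)
  have h0 : ∀ᵐ ω ∂P, ENNReal.ofReal (‖X ω‖ ^ 2) =
      ∫⁻ t in Set.Icc 0 T, ENNReal.ofReal (Z t ω ^ 2) := by
    filter_upwards [hX] with ω h
    have := h 0
    rw [sub_zero] at this
    rw [this]
    refine lintegral_congr_ae ?_
    filter_upwards [Lp.coeFn_zero ℝ 2 (volume.restrict (Set.Icc 0 T))] with t ht
    rw [ht]; simp
  have h1 : ∫⁻ ω, ENNReal.ofReal (‖X ω‖ ^ 2) ∂P < ⊤ := by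
    rw [lintegral_congr_ae h0, lintegral_lintegral_swap]
    · calc ∫⁻ t in Set.Icc 0 T, ∫⁻ ω, ENNReal.ofReal (Z t ω ^ 2) ∂P
          ≤ ∫⁻ t in Set.Icc 0 T, ENNReal.ofReal (k + T) := by
            refine setLIntegral_mono' measurableSet_Icc fun t ht => ?_
            rw [lintegral_sq_gauss (hG.one ht) (hZt t)]
            exact ENNReal.ofReal_le_ofReal (by linarith [ht.2])
        _ < ⊤ := by
            rw [setLIntegral_const, Real.volume_Icc]
            exact ENNReal.mul_lt_top ENNReal.ofReal_lt_top ENNReal.ofReal_lt_top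
    · exact ((hZ.comp measurable_swap).pow_const 2).ennreal_ofReal.aemeasurable
  calc ∫⁻ ω, ENNReal.ofReal (α.inf' ⟨a, ha⟩ fun a => ‖X ω - a‖ ^ 2) ∂P
      ≤ ∫⁻ ω, (ENNReal.ofReal 2 * ENNReal.ofReal (‖X ω‖ ^ 2) + ENNReal.ofReal (2 * ‖a‖ ^ 2)) ∂P := by
        refine lintegral_mono fun ω => ?_
        rw [← ENNReal.ofReal_mul (by norm_num), ← ENNReal.ofReal_add (by positivity) (by positivity)]
        refine ENNReal.ofReal_le_ofReal ((Finset.inf'_le _ ha).trans ?_)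
        have := norm_sub_le (X ω) a
        nlinarith [sq_nonneg (‖X ω‖ - ‖a‖), norm_nonneg (X ω - a), norm_nonneg (X ω), norm_nonneg a]
    _ = ENNReal.ofReal 2 * ∫⁻ ω, ENNReal.ofReal (‖X ω‖ ^ 2) ∂P + ENNReal.ofReal (2 * ‖a‖ ^ 2) := by
        rw [lintegral_add_right _ measurable_const, lintegral_const_mul' _ _ ENNReal.ofReal_ne_top]
        simp
    _ < ⊤ := ENNReal.add_lt_top.2 ⟨ENNReal.mul_lt_top ENNReal.ofReal_lt_top h1,
        ENNReal.ofReal_lt_top⟩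

lemma aesm_inf' {H : Type*} [NormedAddCommGroup H] (X : Ω → H) (hX : AEStronglyMeasurable X P)
    (α : Finset H) (hα : α.Nonempty) :
    AEStronglyMeasurable (fun ω => α.inf' hα fun a => ‖X ω - a‖ ^ 2) P := by
  induction hα using Finset.Nonempty.cons_induction with
  | singleton a =>
    simp only [Finset.inf'_singleton]
    exact ((hX.sub aestronglyMeasurable_const).norm.pow 2)
  | cons a s ha hs ih =>
    simp only [Finset.inf'_cons hs]
    exact ((hX.sub aestronglyMeasurable_const).norm.pow 2).inf ih

lemma lower_quant (hG : GaussK P T k Z) (hZ : Measurable (Function.uncurry Z)) (hT : 0 < T)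
    (X : Ω → Lp ℝ 2 (volume.restrict (Set.Icc 0 T))) (hXm : AEStronglyMeasurable X P)
    (hX : ∀ᵐ ω ∂P, ∀ a : Lp ℝ 2 (volume.restrict (Set.Icc 0 T)),
      ENNReal.ofReal (‖X ω - a‖ ^ 2) =
        ∫⁻ t in Set.Icc 0 T, ENNReal.ofReal ((Z t ω - a t) ^ 2))
    (n : ℕ) (hn : 3 ≤ n) :
    T / 48 / Real.sqrt (Real.log n) ≤ quantErr P X n := by
  have hn' : (3 : ℝ) ≤ n := by exact_mod_cast hn
  have hlog1 : 1 ≤ Real.log n := by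
    rw [Real.le_log_iff_exp_le (by linarith)]
    linarith [Real.exp_one_lt_d9]
  set d : ℕ := ⌈4 * Real.log (2 * n)⌉₊ with hd
  have hl2 : Real.log (2 * n) ≤ 2 * Real.log n := by
    rw [Real.log_mul (by norm_num) (by linarith)]
    have := Real.log_le_log (by norm_num) (show (2 : ℝ) ≤ n by linarith)
    linarith
  have hd1 : 4 * Real.log (2 * n) ≤ d := Nat.le_ceil _
  have hpos : 0 < Real.log (2 * n) := Real.log_pos (by linarith)
  have hd2 : (d : ℝ) ≤ 9 * Real.log n := by
    have := Nat.ceil_lt_add_one (show 0 ≤ 4 * Real.log (2 * n) by linarith)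
    linarith
  have hd0 : (0 : ℝ) < d := by linarith
  have hnd : n * Real.exp (-(d / 4)) ≤ 1 / 2 := by
    have : Real.exp (-(d / 4)) ≤ Real.exp (- Real.log (2 * n)) := Real.exp_le_exp.2 (by linarith)
    rw [Real.exp_neg (Real.log _), Real.exp_log (by linarith)] at this
    calc n * Real.exp (-(d / 4)) ≤ n * (2 * n : ℝ)⁻¹ := by gcongr
      _ = 1 / 2 := by field_simp
  refine le_csInf ⟨_, {0}, Finset.singleton_nonempty _, by simp; omega, rfl⟩ ?_
  rintro r ⟨α, hα, hcard, rfl⟩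
  have h1 := lower_lintegral hG hZ hT X hX d (by exact_mod_cast hd0) α hα n hcard hnd
  have h2 := lintegral_norm_lt_top hG hZ X hX α hα
  have h3 : ∫ ω, α.inf' hα (fun a => ‖X ω - a‖ ^ 2) ∂P =
      (∫⁻ ω, ENNReal.ofReal (α.inf' hα fun a => ‖X ω - a‖ ^ 2) ∂P).toReal :=
    integral_eq_lintegral_of_nonneg_ae
      (ae_of_all _ fun ω => Finset.le_inf' _ _ fun a _ => sq_nonneg _) (aesm_inf' X hXm α hα)
  have h4 : T ^ 2 / (128 * d) ≤ ∫ ω, α.inf' hα (fun a => ‖X ω - a‖ ^ 2) ∂P := by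
    rw [h3]
    exact (ENNReal.ofReal_le_iff_le_toReal h2.ne).1 h1
  refine Real.le_sqrt_of_sq_le (le_trans ?_ h4)
  rw [div_pow, Real.sq_sqrt (by linarith), div_le_div_iff₀ (by linarith) (by linarith)]
  nlinarith [sq_nonneg T]
end lower2

lemma sum_half_pow (M : ℤ) : ∑ z ∈ Finset.Icc (-M) M, ((1 : ℝ) / 2) ^ z.natAbs ≤ 3 := by
  have h1 : HasSum (fun n : ℕ => ((1 : ℝ) / 2) ^ (n : ℤ).natAbs) 2 := by
    simpa using hasSum_geometric_two
  have h2 : HasSum (fun n : ℕ => ((1 : ℝ) / 2) ^ (-((n : ℤ) + 1)).natAbs) 1 := by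
    have := hasSum_geometric_two.mul_left ((1 : ℝ) / 2)
    have e : ∀ n : ℕ, (-((n : ℤ) + 1)).natAbs = n + 1 := fun n => by omega
    simp only [e, pow_succ']
    simpa using this
  have h3 := HasSum.of_nat_of_neg_add_one (f := fun z : ℤ => ((1 : ℝ) / 2) ^ z.natAbs) h1 h2
  refine (sum_le_hasSum _ (fun i _ => by positivity) h3).trans (by norm_num)

/-- Integer vectors of bounded total variation. -/
noncomputable def codeSet (m M : ℕ) : Finset (Fin m → ℤ) :=
  (Fintype.piFinset fun _ : Fin m => Finset.Icc (-(M : ℤ)) M).filter (fun b => ∑ i, |b i| ≤ M)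

lemma card_codeSet (m M : ℕ) : ((codeSet m M).card : ℝ) ≤ 2 ^ M * 3 ^ m := by
  calc ((codeSet m M).card : ℝ) = ∑ b ∈ codeSet m M, (1 : ℝ) := by simp
    _ ≤ ∑ b ∈ codeSet m M, 2 ^ M * ∏ i, ((1 : ℝ) / 2) ^ (b i).natAbs := by
        refine Finset.sum_le_sum fun b hb => ?_
        have hb2 := (Finset.mem_filter.1 hb).2
        have hb3 : ∑ i, (b i).natAbs ≤ M := by
          have : ((∑ i, (b i).natAbs : ℕ) : ℤ) ≤ M := by push_cast; exact hb2
          exact_mod_cast this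
        rw [Finset.prod_pow_eq_pow_sum, one_div, inv_pow, ← div_eq_mul_inv,
          one_le_div (by positivity)]
        exact pow_le_pow_right₀ (by norm_num) hb3
    _ ≤ ∑ b ∈ Fintype.piFinset fun _ : Fin m => Finset.Icc (-(M : ℤ)) M,
          2 ^ M * ∏ i, ((1 : ℝ) / 2) ^ (b i).natAbs :=
        Finset.sum_le_sum_of_subset_of_nonneg (Finset.filter_subset _ _)
          (fun _ _ _ => by positivity)
    _ = 2 ^ M * ∏ i : Fin m, ∑ z ∈ Finset.Icc (-(M : ℤ)) M, ((1 : ℝ) / 2) ^ z.natAbs := by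
        rw [← Finset.mul_sum, Finset.prod_univ_sum]
    _ ≤ 2 ^ M * ∏ i : Fin m, (3 : ℝ) := by
        gcongr
        exact sum_half_pow _
    _ = _ := by simp

section upper
variable {Ω : Type*} [MeasurableSpace Ω] {P : Measure Ω} [IsProbabilityMeasure P]
  {T k : ℝ} {Z : ℝ → Ω → ℝ}

/-- Normalised variation along the grid of mesh `h`. -/
noncomputable def varS (Z : ℝ → Ω → ℝ) (d : ℕ) (h : ℝ) (ω : Ω) : ℝ :=
  |Z 0 ω / √h| + ∑ i : Fin d, |(Z (((i : ℕ) + 1) * h) ω - Z ((i : ℕ) * h) ω) / √h|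

lemma exp_varS (hG : GaussK P T k Z) (hZ : ∀ t, Measurable (Z t)) (hT : 0 < T) (hk : 0 ≤ k)
    (d : ℕ) (h : ℝ) (hh : 0 < h) (hTh : d * h = T) :
    ∫⁻ ω, ENNReal.ofReal (Real.exp (varS Z d h ω)) ∂P ≤
      ENNReal.ofReal (2 ^ (d + 1) * Real.exp ((k + T) / h / 2)) := by
  let sg : Bool → ℝ := fun b => if b then 1 else -1
  let Y : (Option (Fin d) → Bool) → Ω → ℝ := fun σ ω => sg (σ none) / √h * Z 0 ω +
    ∑ i : Fin d, sg (σ (some i)) / √h * (Z (((i : ℕ) + 1) * h) ω - Z ((i : ℕ) * h) ω)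
  have hsg : ∀ b, sg b ^ 2 = 1 := by intro b; cases b <;> simp [sg]
  have hYm : ∀ σ, Measurable (Y σ) := fun σ =>
    ((hZ _).const_mul _).add (Finset.measurable_sum _ fun i _ => ((hZ _).sub (hZ _)).const_mul _)
  have hY : ∀ σ, ∫⁻ ω, ENNReal.ofReal (Real.exp (Y σ ω)) ∂P =
      ENNReal.ofReal (Real.exp ((k + T) / h / 2)) := by
    intro σ
    have := hG.incr hT (fun i : Fin d => ((i : ℕ) : ℝ) * h) (fun i : Fin d => (((i : ℕ) : ℝ) + 1) * h)
      (fun i => by positivity) (fun i => by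
        have : ((i : ℕ) : ℝ) + 1 ≤ d := by exact_mod_cast i.2
        nlinarith) (fun i => by nlinarith) (by
        intro i j hij
        have hij' : (i : ℕ) ≠ j := fun hc => hij (Fin.ext hc)
        rcases lt_or_gt_of_ne hij' with hlt | hlt
        · left
          have : ((i : ℕ) : ℝ) + 1 ≤ (j : ℕ) := by exact_mod_cast hlt
          nlinarith
        · right
          have : ((j : ℕ) : ℝ) + 1 ≤ (i : ℕ) := by exact_mod_cast hlt
          nlinarith) (sg (σ none) / √h) (fun i => sg (σ (some i)) / √h)
    rw [lintegral_exp_gauss this (hYm σ)]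
    congr 2
    have e : ∀ i : Fin d, (((i : ℕ) : ℝ) + 1) * h - (i : ℕ) * h = h := fun i => by ring
    simp only [div_pow, hsg, Real.sq_sqrt hh.le, e]
    rw [Real.coe_toNNReal _ (by positivity)]
    simp only [Finset.sum_const, Finset.card_univ, Fintype.card_fin, nsmul_eq_mul]
    rw [← hTh]
    field_simp
  have hexp : ∀ ω, Real.exp (varS Z d h ω) ≤ ∑ σ, Real.exp (Y σ ω) := by
    intro ω
    let x : Option (Fin d) → ℝ := fun o => o.elim (Z 0 ω / √h)
      (fun i => (Z (((i : ℕ) + 1) * h) ω - Z ((i : ℕ) * h) ω) / √h)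
    have e1 : varS Z d h ω = ∑ o, |x o| := by
      simp [varS, Fintype.sum_option, x]
    have e2 : ∀ σ, Real.exp (Y σ ω) = ∏ o, Real.exp (sg (σ o) * x o) := by
      intro σ
      rw [← Real.exp_sum, Fintype.sum_option]
      congr 1
      simp only [Y, x, Option.elim_none, Option.elim_some]
      congr 1
      · ring
      · exact Finset.sum_congr rfl fun i _ => by ring
    simp_rw [e2]
    rw [← Fintype.prod_sum (fun o s => Real.exp (sg s * x o)), e1, Real.exp_sum]
    refine Finset.prod_le_prod (fun _ _ => by positivity) fun o _ => ?_
    simp only [Fintype.sum_bool, sg]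
    have := Real.exp_abs_le (x o)
    simpa using this
  calc ∫⁻ ω, ENNReal.ofReal (Real.exp (varS Z d h ω)) ∂P
      ≤ ∫⁻ ω, ∑ σ, ENNReal.ofReal (Real.exp (Y σ ω)) ∂P := by
        refine lintegral_mono fun ω => ?_
        rw [← ENNReal.ofReal_sum_of_nonneg (fun _ _ => by positivity)]
        exact ENNReal.ofReal_le_ofReal (hexp ω)
    _ = ∑ σ : Option (Fin d) → Bool, ENNReal.ofReal (Real.exp ((k + T) / h / 2)) := by
        rw [lintegral_finsetSum _ (fun σ _ => by have := hYm σ; fun_prop)]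
        exact Finset.sum_congr rfl fun σ _ => hY σ
    _ ≤ _ := by
        rw [Finset.sum_const, Finset.card_univ, nsmul_eq_mul, ENNReal.ofReal_mul (by positivity)]
        gcongr
        simp [ENNReal.ofReal_pow]

lemma measurable_varS (hZ : ∀ t, Measurable (Z t)) (d : ℕ) (h : ℝ) : Measurable (varS Z d h) := by
  unfold varS
  refine Measurable.add ?_ (Finset.measurable_sum _ fun i _ => ?_)
  · exact ((hZ 0).div_const _).abs
  · exact (((hZ _).sub (hZ _)).div_const _).abs

lemma prob_varS (hG : GaussK P T k Z) (hZ : ∀ t, Measurable (Z t)) (hT : 0 < T) (hk : 0 ≤ k)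
    (d : ℕ) (hd : 0 < d) (h : ℝ) (hh : 0 < h) (hTh : d * h = T) (C : ℕ) (hC : 4 + k / T ≤ C) :
    P {ω | (C * d : ℝ) < varS Z d h ω} ≤ ENNReal.ofReal (Real.exp (-d)) := by
  have hd' : (1 : ℝ) ≤ d := by exact_mod_cast hd
  have h1 := exp_varS hG hZ hT hk d h hh hTh
  have h2 := mul_meas_ge_le_lintegral (μ := P)
      (f := fun ω => ENNReal.ofReal (Real.exp (varS Z d h ω)))
      (by have := measurable_varS hZ d h; fun_prop)
      (ENNReal.ofReal (Real.exp (C * d)))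
  have h3 : P {ω | (C * d : ℝ) < varS Z d h ω} ≤ P {ω | ENNReal.ofReal (Real.exp (C * d)) ≤
        ENNReal.ofReal (Real.exp (varS Z d h ω))} := by
      refine measure_mono fun ω hω => ?_
      exact ENNReal.ofReal_le_ofReal (Real.exp_le_exp.2 (le_of_lt hω))
  have h4 := (mul_le_mul_right h3 _).trans (h2.trans h1)
  have h5 : P {ω | (C * d : ℝ) < varS Z d h ω} = ENNReal.ofReal (Real.exp (-(C * d))) *
        (ENNReal.ofReal (Real.exp (C * d)) * P {ω | (C * d : ℝ) < varS Z d h ω}) := by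
      rw [← mul_assoc, ← ENNReal.ofReal_mul (by positivity), ← Real.exp_add]
      simp
  rw [h5]
  refine (mul_le_mul_right h4 _).trans ?_
  rw [← ENNReal.ofReal_mul (by positivity)]
  refine ENNReal.ofReal_le_ofReal ?_
  have h6 : (2 : ℝ) ^ (d + 1) ≤ Real.exp (d + 1) := by
    have : (2 : ℝ) ≤ Real.exp 1 := by linarith [Real.exp_one_gt_d9]
    calc (2 : ℝ) ^ (d + 1) ≤ (Real.exp 1) ^ (d + 1) := by gcongr
      _ = _ := by rw [← Real.exp_nat_mul]; push_cast; congr 1; ring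
  calc Real.exp (-(C * d)) * (2 ^ (d + 1) * Real.exp ((k + T) / h / 2))
      ≤ Real.exp (-(C * d)) * (Real.exp (d + 1) * Real.exp ((k + T) / h / 2)) := by gcongr
    _ = Real.exp (-(C * d) + ((d + 1) + (k + T) / h / 2)) := by
      rw [← Real.exp_add, ← Real.exp_add]
    _ ≤ _ := by
      refine Real.exp_le_exp.2 ?_
      have e : (k + T) / h = d * (1 + k / T) := by
        rw [← hTh]; field_simp; ring
      rw [e]
      have : 0 ≤ k / T := by positivity
      nlinarith

lemma fourth_moment (hG : GaussK P T k Z) (hZ : ∀ t, Measurable (Z t)) {t : ℝ}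
    (ht : t ∈ Set.Icc 0 T) (hk : 0 ≤ k) :
    ∫⁻ ω, ENNReal.ofReal (Z t ω ^ 4) ∂P ≤ ENNReal.ofReal (48 * Real.exp ((k + T) / 2)) := by
  have hkt : 0 ≤ k + t := add_nonneg hk ht.1
  have h1 := lintegral_exp_gauss (hG.one ht) (hZ t)
  have h2 : Measure.map (fun ω => - Z t ω) P = gaussianReal 0 (k + t).toNNReal := by
    have := hG.law (fun _ : Unit => t) (fun _ => ht) (fun _ => -1)
    simpa using this
  have h3 := lintegral_exp_gauss h2 (hZ t).neg
  rw [Real.coe_toNNReal _ hkt] at h1 h3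
  calc ∫⁻ ω, ENNReal.ofReal (Z t ω ^ 4) ∂P
      ≤ ∫⁻ ω, ENNReal.ofReal 24 * (ENNReal.ofReal (Real.exp (Z t ω)) +
          ENNReal.ofReal (Real.exp (-Z t ω))) ∂P := by
        refine lintegral_mono fun ω => ?_
        rw [← ENNReal.ofReal_add (by positivity) (by positivity),
          ← ENNReal.ofReal_mul (by norm_num)]
        refine ENNReal.ofReal_le_ofReal ?_
        have a1 := Real.pow_div_factorial_le_exp |Z t ω| (abs_nonneg _) 4
        have a2 := Real.exp_abs_le (Z t ω)
        have a3 : |Z t ω| ^ 4 = Z t ω ^ 4 := by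
          rw [show 4 = 2 * 2 by norm_num, pow_mul, pow_mul, sq_abs]
        rw [a3] at a1
        norm_num [Nat.factorial] at a1
        linarith
    _ = ENNReal.ofReal 24 * (ENNReal.ofReal (Real.exp ((k + t) / 2)) +
          ENNReal.ofReal (Real.exp ((k + t) / 2))) := by
        have hm := hZ t
        rw [lintegral_const_mul _ (by fun_prop), lintegral_add_left (by fun_prop), h1, h3]
    _ ≤ _ := by
        rw [← ENNReal.ofReal_add (by positivity) (by positivity),
          ← ENNReal.ofReal_mul (by norm_num)]
        refine ENNReal.ofReal_le_ofReal ?_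
        have : Real.exp ((k + t) / 2) ≤ Real.exp ((k + T) / 2) :=
          Real.exp_le_exp.2 (by linarith [ht.2])
        linarith

/-- The step function coded by an integer vector. -/
noncomputable def codeFun (d : ℕ) (h : ℝ) (b : Fin (d + 1) → ℤ) (t : ℝ) : ℝ :=
  √h * ∑ j : Fin (d + 1), if (j : ℕ) ≤ ⌊t / h⌋₊ then (b j : ℝ) else 0

lemma memLp_codeFun (d : ℕ) (h : ℝ) (b : Fin (d + 1) → ℤ) (T : ℝ) :
    MemLp (codeFun d h b) 2 (volume.restrict (Set.Icc 0 T)) := by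
  refine MemLp.of_bound ?_ (√h * ∑ j, |(b j : ℝ)|) (ae_of_all _ fun t => ?_)
  · have h1 : Measurable fun m : ℕ => √h * ∑ j : Fin (d + 1), if (j : ℕ) ≤ m then (b j : ℝ) else 0 :=
      measurable_of_countable _
    have h2 : Measurable fun t : ℝ => ⌊t / h⌋₊ := Nat.measurable_floor.comp (measurable_id.div_const h)
    exact (h1.comp h2).aestronglyMeasurable
  · rw [codeFun, norm_mul, Real.norm_of_nonneg (Real.sqrt_nonneg h)]
    gcongr
    refine (norm_sum_le _ _).trans (Finset.sum_le_sum fun j _ => ?_)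
    split_ifs <;> simp

/-- Integer code of a discretised path. -/
def pathCode (F : ℕ → ℤ) (j : ℕ) : ℤ := if j = 0 then F 0 else F j - F (j - 1)

lemma sum_pathCode (F : ℕ → ℤ) (d i : ℕ) (hi : i ≤ d) :
    ∑ j : Fin (d + 1), (if (j : ℕ) ≤ i then (pathCode F j : ℝ) else 0) = F i := by
  rw [Fin.sum_univ_eq_sum_range (fun j => if j ≤ i then (pathCode F j : ℝ) else 0),
    ← Finset.sum_filter]
  have e : (Finset.range (d + 1)).filter (fun j => j ≤ i) = Finset.range (i + 1) := by
    ext j; simp only [Finset.mem_filter, Finset.mem_range]; omega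
  rw [e]
  clear e hi
  induction i with
  | zero => simp [pathCode]
  | succ i ih =>
    rw [Finset.sum_range_succ, ih]
    simp [pathCode]

lemma abs_floor_sub (x y : ℝ) : (|⌊x⌋ - ⌊y⌋| : ℝ) ≤ |x - y| + 1 := by
  have := Int.floor_le x
  have := Int.lt_floor_add_one x
  have := Int.floor_le y
  have := Int.lt_floor_add_one y
  rw [abs_le]
  constructor
  · linarith [neg_abs_le (x - y)]
  · linarith [le_abs_self (x - y)]

lemma pathCode_mem (d : ℕ) (h : ℝ) (ω : Ω) (C : ℕ)
    (hS : varS Z d h ω ≤ C * d) :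
    (fun j : Fin (d + 1) => pathCode (fun i => ⌊Z (i * h) ω / √h⌋) j) ∈
      codeSet (d + 1) ((C + 1) * d + 1) := by
  set F : ℕ → ℤ := fun i => ⌊Z (i * h) ω / √h⌋ with hF
  have key : ∑ j : Fin (d + 1), |pathCode F j| ≤ (((C + 1) * d + 1 : ℕ) : ℤ) := by
    have : (∑ j : Fin (d + 1), (|pathCode F j| : ℝ)) ≤ (C + 1) * d + 1 := by
      rw [Fin.sum_univ_succ]
      have a0 : (|pathCode F ((0 : Fin (d + 1)) : ℕ)| : ℝ) ≤ |Z 0 ω / √h| + 1 := by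
        have := abs_floor_sub (Z 0 ω / √h) 0
        simpa [pathCode, hF] using this
      have a1 : ∀ i : Fin d, (|pathCode F (i.succ : ℕ)| : ℝ) ≤
          |(Z (((i : ℕ) + 1) * h) ω - Z ((i : ℕ) * h) ω) / √h| + 1 := by
        intro i
        have := abs_floor_sub (Z (((i : ℕ) + 1) * h) ω / √h) (Z ((i : ℕ) * h) ω / √h)
        rw [← sub_div] at this
        simpa [pathCode, hF] using this
      have a2 := Finset.sum_le_sum fun (i : Fin d) (_ : i ∈ Finset.univ) => a1 i
      rw [Finset.sum_add_distrib] at a2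
      simp only [Finset.sum_const, Finset.card_univ, Fintype.card_fin, nsmul_eq_mul, mul_one] at a2
      unfold varS at hS
      linarith
    have h2 : ((∑ j : Fin (d + 1), |pathCode F j| : ℤ) : ℝ) ≤ (((C + 1) * d + 1 : ℕ) : ℝ) := by
      push_cast; exact this
    exact_mod_cast h2
  refine Finset.mem_filter.2 ⟨?_, key⟩
  rw [Fintype.mem_piFinset]
  intro j
  rw [Finset.mem_Icc, ← abs_le]
  exact (Finset.single_le_sum (f := fun j : Fin (d + 1) => |pathCode F j|)
    (fun _ _ => abs_nonneg _) (Finset.mem_univ j)).trans key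

lemma zero_mem_codeSet (m M : ℕ) : (fun _ => 0) ∈ codeSet m M := by
  refine Finset.mem_filter.2 ⟨?_, by simp⟩
  rw [Fintype.mem_piFinset]
  intro j
  simp

lemma upper_lintegral (hG : GaussK P T k Z) (hZ : Measurable (Function.uncurry Z)) (hT : 0 < T)
    (hk : 0 ≤ k)
    (X : Ω → Lp ℝ 2 (volume.restrict (Set.Icc 0 T)))
    (hX : ∀ᵐ ω ∂P, ∀ a : Lp ℝ 2 (volume.restrict (Set.Icc 0 T)),
      ENNReal.ofReal (‖X ω - a‖ ^ 2) =
        ∫⁻ t in Set.Icc 0 T, ENNReal.ofReal ((Z t ω - a t) ^ 2))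
    (C : ℕ) (hC : 4 + k / T ≤ C) (d : ℕ) (hd : 0 < d) :
    ∃ α : Finset (Lp ℝ 2 (volume.restrict (Set.Icc 0 T))), ∃ hα : α.Nonempty,
      (α.card : ℝ) ≤ 3 ^ ((C + 4) * d) ∧
      ∫⁻ ω, ENNReal.ofReal (α.inf' hα fun a => ‖X ω - a‖ ^ 2) ∂P ≤
        ENNReal.ofReal (T ^ 2 * (4 + 48 * Real.exp ((k + T) / 2) + 2 / T ^ 2) / d) := by
  classical
  have hd' : (0 : ℝ) < d := by exact_mod_cast hd
  set h : ℝ := T / d with hh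
  have hh0 : 0 < h := by positivity
  have hTh : d * h = T := by rw [hh]; field_simp
  have hZt : ∀ t, Measurable (Z t) := fun t => hZ.comp (measurable_const.prodMk measurable_id)
  let B := codeSet (d + 1) ((C + 1) * d + 1)
  let α : Finset (Lp ℝ 2 (volume.restrict (Set.Icc 0 T))) :=
    B.image fun b => (memLp_codeFun d h b T).toLp (codeFun d h b)
  have hα : α.Nonempty := Finset.Nonempty.image ⟨_, zero_mem_codeSet _ _⟩ _
  refine ⟨α, hα, ?_, ?_⟩
  · have h1 : (α.card : ℝ) ≤ B.card := by exact_mod_cast Finset.card_image_le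
    refine h1.trans ((card_codeSet _ _).trans ?_)
    calc (2 : ℝ) ^ ((C + 1) * d + 1) * 3 ^ (d + 1) ≤ 3 ^ ((C + 1) * d + 1) * 3 ^ (d + 1) := by
          gcongr; norm_num
      _ = 3 ^ ((C + 1) * d + 1 + (d + 1)) := by rw [← pow_add]
      _ ≤ _ := pow_le_pow_right₀ (by norm_num) (by nlinarith)
  let A : Set Ω := {ω | (C * d : ℝ) < varS Z d h ω}
  have hA : MeasurableSet A := measurableSet_lt measurable_const (measurable_varS hZt d h)
  have hPA : P A ≤ ENNReal.ofReal (Real.exp (-d)) := prob_varS hG hZt hT hk d hd h hh0 hTh C hC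
  let ψ : ℝ → Ω → ENNReal := fun t ω =>
    ENNReal.ofReal 2 * ENNReal.ofReal ((Z t ω - Z (⌊t / h⌋₊ * h) ω) ^ 2) + ENNReal.ofReal (2 * h) +
      ENNReal.ofReal h * ENNReal.ofReal (Z t ω ^ 4) +
      ENNReal.ofReal (1 / h) * A.indicator (fun _ => 1) ω
  have hτm : Measurable fun t : ℝ => (⌊t / h⌋₊ : ℝ) * h :=
    ((measurable_of_countable (fun n : ℕ => (n : ℝ))).comp
      (Nat.measurable_floor.comp (measurable_id.div_const h))).mul_const h
  have hm1 : Measurable fun p : ℝ × Ω => Z (⌊p.1 / h⌋₊ * h) p.2 :=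
    hZ.comp ((hτm.comp measurable_fst).prodMk measurable_snd)
  have hm0 : Measurable fun p : ℝ × Ω => Z p.1 p.2 := hZ
  have hmA : Measurable fun p : ℝ × Ω => A.indicator (fun _ => (1 : ENNReal)) p.2 :=
    (measurable_const.indicator hA).comp measurable_snd
  have hψ : Measurable (fun p : ℝ × Ω => ψ p.1 p.2) := by
    have n1 : Measurable fun p : ℝ × Ω =>
        ENNReal.ofReal 2 * ENNReal.ofReal ((Z p.1 p.2 - Z (⌊p.1 / h⌋₊ * h) p.2) ^ 2) :=
      ((hm0.sub hm1).pow_const 2).ennreal_ofReal.const_mul _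
    have n2 : Measurable fun p : ℝ × Ω => ENNReal.ofReal h * ENNReal.ofReal (Z p.1 p.2 ^ 4) :=
      (hm0.pow_const 4).ennreal_ofReal.const_mul _
    have n3 : Measurable fun p : ℝ × Ω =>
        ENNReal.ofReal (1 / h) * A.indicator (fun _ => (1 : ENNReal)) p.2 := hmA.const_mul _
    exact ((n1.add measurable_const).add n2).add n3
  have hfl : ∀ t ∈ Set.Icc 0 T, ⌊t / h⌋₊ ≤ d ∧ (⌊t / h⌋₊ * h : ℝ) ≤ t ∧
      t ≤ ⌊t / h⌋₊ * h + h := by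
    intro t ht
    have h0 : 0 ≤ t / h := div_nonneg ht.1 hh0.le
    have h1 := Nat.floor_le h0
    have h2 := Nat.lt_floor_add_one (t / h)
    rw [le_div_iff₀ hh0] at h1
    rw [div_lt_iff₀ hh0] at h2
    refine ⟨?_, h1, by linarith⟩
    have : t / h ≤ d := by rw [div_le_iff₀ hh0]; linarith [ht.2]
    exact Nat.floor_le_of_le this
  have step1 : ∀ᵐ ω ∂P, ENNReal.ofReal (α.inf' hα fun a => ‖X ω - a‖ ^ 2) ≤
      ∫⁻ t in Set.Icc 0 T, ψ t ω := by
    filter_upwards [hX] with ω hω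
    have hb : ∀ b ∈ B, ENNReal.ofReal (α.inf' hα fun a => ‖X ω - a‖ ^ 2) ≤
        ∫⁻ t in Set.Icc 0 T, ENNReal.ofReal ((Z t ω - codeFun d h b t) ^ 2) := by
      intro b hb
      have h1 : α.inf' hα (fun a => ‖X ω - a‖ ^ 2) ≤
          ‖X ω - (memLp_codeFun d h b T).toLp (codeFun d h b)‖ ^ 2 :=
        Finset.inf'_le (fun a => ‖X ω - a‖ ^ 2) (Finset.mem_image_of_mem _ hb)
      refine (ENNReal.ofReal_le_ofReal h1).trans ?_
      rw [hω]
      refine le_of_eq (lintegral_congr_ae ?_)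
      filter_upwards [(memLp_codeFun d h b T).coeFn_toLp] with t ht
      rw [ht]
    by_cases hωA : ω ∈ A
    · refine (hb _ (zero_mem_codeSet _ _)).trans (lintegral_mono fun t => ?_)
      have e : codeFun d h (fun _ => 0) t = 0 := by simp [codeFun]
      rw [e, sub_zero]
      refine le_trans ?_ (add_le_add (le_add_left le_rfl) le_rfl :
        ENNReal.ofReal h * ENNReal.ofReal (Z t ω ^ 4) +
          ENNReal.ofReal (1 / h) * A.indicator (fun _ => 1) ω ≤ ψ t ω)
      rw [Set.indicator_of_mem hωA, mul_one, ← ENNReal.ofReal_mul hh0.le,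
        ← ENNReal.ofReal_add (by positivity) (by positivity)]
      refine ENNReal.ofReal_le_ofReal ?_
      have e2 : h * Z t ω ^ 4 + 1 / h - Z t ω ^ 2 =
          1 / h * ((h * Z t ω ^ 2 - 1 / 2) ^ 2 + 3 / 4) := by
        field_simp; ring
      have : 0 ≤ 1 / h * ((h * Z t ω ^ 2 - 1 / 2) ^ 2 + 3 / 4) := by positivity
      linarith
    · have hS : varS Z d h ω ≤ C * d := not_lt.1 hωA
      refine (hb _ (pathCode_mem d h ω C hS)).trans (setLIntegral_mono' measurableSet_Icc
        fun t ht => ?_)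
      refine le_trans ?_ (le_add_right (le_add_right le_rfl) :
        ENNReal.ofReal 2 * ENNReal.ofReal ((Z t ω - Z (⌊t / h⌋₊ * h) ω) ^ 2) +
          ENNReal.ofReal (2 * h) ≤ ψ t ω)
      rw [← ENNReal.ofReal_mul (by norm_num), ← ENNReal.ofReal_add (by positivity) (by positivity)]
      refine ENNReal.ofReal_le_ofReal ?_
      have e : codeFun d h (fun j : Fin (d + 1) => pathCode (fun i => ⌊Z (i * h) ω / √h⌋) j) t =
          √h * ⌊Z (⌊t / h⌋₊ * h) ω / √h⌋ := by
        rw [codeFun, sum_pathCode _ d _ (hfl t ht).1]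
      rw [e]
      set z := Z (⌊t / h⌋₊ * h) ω
      have hs : 0 < √h := Real.sqrt_pos.2 hh0
      have hs2 : √h ^ 2 = h := Real.sq_sqrt hh0.le
      have b1 := Int.floor_le (z / √h)
      have b2 := (Int.lt_floor_add_one (z / √h)).le
      have e3 : z = √h * (z / √h) := by field_simp
      have b3 : (z - √h * ⌊z / √h⌋) ^ 2 ≤ h := by
        have : z - √h * ⌊z / √h⌋ = √h * (z / √h - ⌊z / √h⌋) := by rw [mul_sub, ← e3]
        rw [this, mul_pow, hs2]
        have : (z / √h - ⌊z / √h⌋) ^ 2 ≤ 1 := by nlinarith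
        nlinarith
      nlinarith [sq_nonneg ((Z t ω - z) - (z - √h * ⌊z / √h⌋))]
  refine (lintegral_mono_ae step1).trans ?_
  have hsw : ∫⁻ ω, ∫⁻ t in Set.Icc 0 T, ψ t ω ∂volume ∂P = ∫⁻ t in Set.Icc 0 T, ∫⁻ ω, ψ t ω ∂P :=
    lintegral_lintegral_swap (f := fun ω t => ψ t ω)
      (by exact (hψ.comp measurable_swap).aemeasurable)
  rw [hsw]
  have step2 : ∀ t ∈ Set.Icc 0 T, ∫⁻ ω, ψ t ω ∂P ≤
      ENNReal.ofReal (h * (4 + 48 * Real.exp ((k + T) / 2) + 2 / T ^ 2)) := by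
    intro t ht
    obtain ⟨hf1, hf2, hf3⟩ := hfl t ht
    have m1 : Measurable fun ω => ENNReal.ofReal ((Z t ω - Z (⌊t / h⌋₊ * h) ω) ^ 2) :=
      (((hZt _).sub (hZt _)).pow_const 2).ennreal_ofReal
    have m2 : Measurable fun ω => ENNReal.ofReal (Z t ω ^ 4) := ((hZt _).pow_const 4).ennreal_ofReal
    have m3 : Measurable (A.indicator (fun _ => (1 : ENNReal))) := measurable_const.indicator hA
    have i1 : ∫⁻ ω, ENNReal.ofReal ((Z t ω - Z (⌊t / h⌋₊ * h) ω) ^ 2) ∂P ≤ ENNReal.ofReal h := by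
      have := hG.incr hT (ι := Unit) (fun _ => ⌊t / h⌋₊ * h) (fun _ => t) (fun _ => by positivity)
        (fun _ => ht.2) (fun _ => hf2) (fun i j hij => absurd (Subsingleton.elim i j) hij) 0
        (fun _ => 1)
      simp only [zero_mul, zero_add, one_mul, one_pow, Finset.univ_unique, Finset.sum_const,
        Finset.card_singleton, one_smul, ne_eq, OfNat.ofNat_ne_zero, not_false_eq_true,
        zero_pow] at this
      rw [lintegral_sq_gauss this ((hZt _).sub (hZt _))]
      exact ENNReal.ofReal_le_ofReal (by linarith)
    have i2 := fourth_moment hG hZt ht hk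
    have i3 : ∫⁻ ω, A.indicator (fun _ => (1 : ENNReal)) ω ∂P ≤ ENNReal.ofReal (Real.exp (-d)) := by
      rw [lintegral_indicator hA]
      simpa using hPA
    simp only [ψ]
    rw [lintegral_add_right _ (m3.const_mul _), lintegral_add_right _ (m2.const_mul _),
      lintegral_add_right _ measurable_const, lintegral_const_mul _ m1, lintegral_const_mul _ m2,
      lintegral_const_mul _ m3, lintegral_const, measure_univ, mul_one]
    calc _ ≤ ENNReal.ofReal 2 * ENNReal.ofReal h + ENNReal.ofReal (2 * h) +
          ENNReal.ofReal h * ENNReal.ofReal (48 * Real.exp ((k + T) / 2)) +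
          ENNReal.ofReal (1 / h) * ENNReal.ofReal (Real.exp (-d)) := by gcongr
      _ ≤ _ := by
        rw [← ENNReal.ofReal_mul (by positivity), ← ENNReal.ofReal_mul (by positivity),
          ← ENNReal.ofReal_mul (by positivity), ← ENNReal.ofReal_add (by positivity) (by positivity),
          ← ENNReal.ofReal_add (by positivity) (by positivity),
          ← ENNReal.ofReal_add (by positivity) (by positivity)]
        refine ENNReal.ofReal_le_ofReal ?_
        have q1 : (d : ℝ) ^ 2 / 2 ≤ Real.exp d := by
          have := Real.pow_div_factorial_le_exp (d : ℝ) hd'.le 2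
          simpa using this
        have q2 : 1 / h * Real.exp (-d) ≤ h * (2 / T ^ 2) := by
          rw [Real.exp_neg, hh, ← one_div]
          have : 1 / Real.exp d ≤ 1 / ((d : ℝ) ^ 2 / 2) := by gcongr
          calc 1 / (T / d) * (1 / Real.exp d) ≤ 1 / (T / d) * (1 / ((d : ℝ) ^ 2 / 2)) := by gcongr
            _ = T / d * (2 / T ^ 2) := by field_simp
        linarith
  calc ∫⁻ t in Set.Icc 0 T, ∫⁻ ω, ψ t ω ∂P
      ≤ ∫⁻ t in Set.Icc 0 T, ENNReal.ofReal (h * (4 + 48 * Real.exp ((k + T) / 2) + 2 / T ^ 2)) :=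
        setLIntegral_mono' measurableSet_Icc step2
    _ = _ := by
        rw [setLIntegral_const, Real.volume_Icc, ← ENNReal.ofReal_mul (by positivity)]
        congr 1
        rw [hh]; ring

lemma upper_quant (hG : GaussK P T k Z) (hZ : Measurable (Function.uncurry Z)) (hT : 0 < T)
    (hk : 0 ≤ k)
    (X : Ω → Lp ℝ 2 (volume.restrict (Set.Icc 0 T))) (hXm : AEStronglyMeasurable X P)
    (hX : ∀ᵐ ω ∂P, ∀ a : Lp ℝ 2 (volume.restrict (Set.Icc 0 T)),
      ENNReal.ofReal (‖X ω - a‖ ^ 2) =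
        ∫⁻ t in Set.Icc 0 T, ENNReal.ofReal ((Z t ω - a t) ^ 2)) :
    ∃ C₂ : ℝ, ∃ N : ℕ, ∀ n : ℕ, N ≤ n → quantErr P X n ≤ C₂ / Real.sqrt (Real.log n) := by
  obtain ⟨C, hC⟩ := exists_nat_ge (4 + k / T)
  set K : ℝ := T ^ 2 * (4 + 48 * Real.exp ((k + T) / 2) + 2 / T ^ 2) with hK
  have hK0 : 0 < K := by positivity
  set L : ℝ := (C + 4) * Real.log 3 with hL
  have hlog3 : 0 < Real.log 3 := Real.log_pos (by norm_num)
  have hL0 : 0 < L := by positivity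
  refine ⟨√(2 * L * K), ⌈Real.exp L⌉₊, fun n hn => ?_⟩
  have hn1 : Real.exp L ≤ n := (Nat.le_ceil _).trans (by exact_mod_cast hn)
  have hn0 : (0 : ℝ) < n := (Real.exp_pos L).trans_le hn1
  have hlog : L ≤ Real.log n := (Real.le_log_iff_exp_le hn0).2 hn1
  set d : ℕ := ⌊Real.log n / L⌋₊ with hd
  have hq : 1 ≤ Real.log n / L := by rw [one_le_div hL0]; exact hlog
  have hd1 : 1 ≤ d := Nat.le_floor (by simpa using hq)
  have hd1' : (1 : ℝ) ≤ d := by exact_mod_cast hd1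
  have hdle : (d : ℝ) ≤ Real.log n / L := Nat.floor_le (by linarith)
  have hdge : Real.log n / L ≤ 2 * d := by
    have := Nat.lt_floor_add_one (Real.log n / L)
    linarith
  obtain ⟨α, hα, hcard, hint⟩ := upper_lintegral hG hZ hT hk X hX C hC d hd1
  have hcard' : α.card ≤ n := by
    have : (3 : ℝ) ^ ((C + 4) * d) ≤ n := by
      rw [← Real.log_le_log_iff (by positivity) hn0, Real.log_pow]
      rw [le_div_iff₀ hL0] at hdle
      push_cast
      rw [hL] at hdle
      linarith
    exact_mod_cast hcard.trans this
  have h3 : ∫ ω, α.inf' hα (fun a => ‖X ω - a‖ ^ 2) ∂P =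
      (∫⁻ ω, ENNReal.ofReal (α.inf' hα fun a => ‖X ω - a‖ ^ 2) ∂P).toReal :=
    integral_eq_lintegral_of_nonneg_ae
      (ae_of_all _ fun ω => Finset.le_inf' _ _ fun a _ => sq_nonneg _) (aesm_inf' X hXm α hα)
  have h4 : ∫ ω, α.inf' hα (fun a => ‖X ω - a‖ ^ 2) ∂P ≤ K / d := by
    rw [h3]
    exact ENNReal.toReal_le_of_le_ofReal (by positivity) hint
  have h5 : quantErr P X n ≤ Real.sqrt (∫ ω, α.inf' hα (fun a => ‖X ω - a‖ ^ 2) ∂P) :=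
    csInf_le ⟨0, by rintro r ⟨_, _, _, rfl⟩; exact Real.sqrt_nonneg _⟩ ⟨α, hα, hcard', rfl⟩
  refine h5.trans ?_
  rw [← Real.sqrt_div (by positivity)]
  refine Real.sqrt_le_sqrt (h4.trans ?_)
  rw [div_le_div_iff₀ (by linarith) (by linarith)]
  rw [div_le_iff₀ hL0] at hdge
  nlinarith

end upper


/-- For a GSP-Wiener process `Z` on `[0,T]` (centered Gaussian with covariance
`min (k+t) (k+s)`, a.s. continuous paths), viewed as an `L²([0,T])`-valued
random variable `X`, the quantization error satisfies
`e_n(Z) = Θ((ln n)^{-1/2})`. -/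
theorem gsp_wiener_quantization_error_theta
    {Ω : Type*} [MeasurableSpace Ω] (P : Measure Ω) [IsProbabilityMeasure P]
    (T k : ℝ) (hT : 0 < T) (hk : 0 ≤ k)
    (Z : ℝ → Ω → ℝ)
    (hGauss : ∀ (m : ℕ) (t : Fin m → ℝ), (∀ i, t i ∈ Set.Icc 0 T) →
      ∀ c : Fin m → ℝ,
        Measure.map (fun ω => ∑ i, c i * Z (t i) ω) P =
          gaussianReal 0
            (∑ i, ∑ j, c i * c j * min (k + t i) (k + t j)).toNNReal)
    (hcont : ∀ᵐ ω ∂P, ContinuousOn (fun t => Z t ω) (Set.Icc 0 T))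
    (X : Ω → Lp ℝ 2 (volume.restrict (Set.Icc 0 T)))
    (hXmeas : AEStronglyMeasurable X P)
    (hXZ : ∀ᵐ ω ∂P,
      (X ω : ℝ → ℝ) =ᵐ[volume.restrict (Set.Icc 0 T)] fun t => Z t ω) :
    ∃ C₁ C₂ : ℝ, ∃ N : ℕ, 0 < C₁ ∧ C₁ ≤ C₂ ∧
      ∀ n : ℕ, N ≤ n →
        C₁ / Real.sqrt (Real.log n) ≤ quantErr P X n ∧
          quantErr P X n ≤ C₂ / Real.sqrt (Real.log n) := by
  obtain ⟨Z', hZm, hG, hZZ⟩ := exists_nice P T k hT Z hGauss hcont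
  have hXZ' : ∀ᵐ ω ∂P,
      (X ω : ℝ → ℝ) =ᵐ[volume.restrict (Set.Icc 0 T)] fun t => Z' t ω := by
    filter_upwards [hXZ, hZZ] with ω h1 h2
    filter_upwards [h1, ae_restrict_mem measurableSet_Icc] with t h3 h4
    rw [h3, h2 t h4]
  have hX := ofReal_norm_sq P T Z' X hXZ'
  obtain ⟨C₂, N, hN⟩ := upper_quant hG hZm hT hk X hXmeas hX
  refine ⟨T / 48, max (T / 48) C₂, max 3 N, by positivity, le_max_left _ _, fun n hn => ⟨?_, ?_⟩⟩
  · exact lower_quant hG hZm hT X hXmeas hX n ((le_max_left _ _).trans hn)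
  · refine (hN n ((le_max_right _ _).trans hn)).trans ?_
    gcongr
    exact le_max_right _ _
end
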